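/- There exists a bijection φ from the set P_X of 891 planes contained in the Fermat cubic fourfold over F̄₂ to the set T_{AB} of 891 Leech lattice points T with |OT| = |AT| = |BT| = 2, such that for all Π, Π′ ∈ P_X, the intersection number Π·Π′ equals ⟨φ(Π), φ(Π′)⟩ − 1. -/

import Mathlib

open scoped BigOperators

/-- A generator matrix of the extended binary Golay code (MOG coordinates). -/
def golayMatrix : Matrix (Fin 12) (Fin 24) (ZMod 2) :=
  !![0, 0, 0, 0, 0, 0, 0, 0, 0, 0, 0, 0, 0, 0, 0, 0, 1, 1, 1, 1, 1, 1, 1, 1;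
    0, 0, 0, 0, 0, 0, 0, 0, 0, 0, 0, 0, 1, 1, 1, 1, 0, 0, 0, 0, 1, 1, 1, 1;
    0, 0, 0, 0, 0, 0, 0, 0, 0, 0, 1, 1, 0, 0, 1, 1, 0, 0, 1, 1, 0, 0, 1, 1;
    0, 0, 0, 0, 0, 0, 0, 0, 0, 1, 0, 1, 0, 1, 0, 1, 0, 1, 0, 1, 0, 1, 0, 1;
    0, 0, 0, 0, 0, 0, 0, 0, 1, 0, 0, 1, 0, 1, 1, 0, 0, 1, 1, 0, 1, 0, 0, 1;
    0, 0, 0, 0, 0, 0, 1, 1, 0, 0, 0, 0, 0, 0, 1, 1, 0, 1, 1, 0, 0, 1, 0, 1;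
    0, 0, 0, 0, 0, 1, 0, 1, 0, 0, 0, 0, 0, 1, 0, 1, 0, 0, 1, 1, 0, 1, 1, 0;
    0, 0, 0, 0, 1, 0, 0, 1, 0, 0, 0, 0, 0, 1, 1, 0, 0, 1, 0, 1, 1, 1, 0, 0;
    0, 0, 0, 1, 0, 0, 0, 1, 0, 0, 0, 1, 0, 0, 0, 1, 0, 1, 1, 1, 1, 0, 0, 0;
    0, 0, 1, 0, 0, 0, 0, 1, 0, 0, 0, 1, 0, 0, 1, 0, 0, 0, 1, 0, 1, 1, 1, 0;
    0, 1, 0, 0, 0, 0, 0, 1, 0, 0, 0, 1, 0, 1, 0, 0, 0, 0, 0, 1, 1, 0, 1, 1;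
    1, 0, 0, 0, 0, 0, 0, 1, 0, 0, 0, 1, 0, 1, 1, 1, 0, 1, 0, 0, 0, 0, 1, 0]

/-- The extended binary Golay code `C₂₄`. -/
def GolayCode : Submodule (ZMod 2) (Fin 24 → ZMod 2) :=
  Submodule.span (ZMod 2) (Set.range fun i => golayMatrix i)

/-- Membership in the Leech lattice `Λ₂₄ ⊂ ℤ²⁴` (coordinates scaled by `√8`),
via the standard congruence characterization. -/
def IsLeech (x : Fin 24 → ℤ) : Prop :=
  ∃ m : ℤ, (m = 0 ∨ m = 1) ∧ (∀ i, (2:ℤ) ∣ (x i - m)) ∧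
    ((fun i => if (4:ℤ) ∣ (x i - m - 2) then (1 : ZMod 2) else 0) ∈ GolayCode) ∧
    (8:ℤ) ∣ ((∑ i, x i) - 4 * m)

/-- The inner product `⟨x, y⟩ = (Σ xᵢ yᵢ)/8` on the Leech lattice. -/
def leechInner (x y : Fin 24 → ℤ) : ℚ := (∑ i, (x i : ℚ) * (y i : ℚ)) / 8

/-- The lattice point `A = (0²¹, 4, 0, −4)`. -/
def vA : Fin 24 → ℤ := fun i => if i.val = 21 then 4 else if i.val = 23 then -4 else 0

/-- The lattice point `B = (0²¹, 0, 4, −4)`. -/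
def vB : Fin 24 → ℤ := fun i => if i.val = 22 then 4 else if i.val = 23 then -4 else 0

/-- `T_AB`: lattice points `T` with `|OT| = |AT| = |BT| = 2`. -/
def TAB : Set (Fin 24 → ℤ) :=
  {T | IsLeech T ∧ leechInner T T = 4 ∧
       leechInner (T - vA) (T - vA) = 4 ∧ leechInner (T - vB) (T - vB) = 4}

/-- A plane contained in the Fermat cubic fourfold `x₁³+⋯+x₆³ = 0 ⊂ P⁵`. -/
def IsFermatPlane (K : Type*) [Field K] (P : Submodule K (Fin 6 → K)) : Prop :=
  Module.finrank K ↥P = 3 ∧ ∀ x ∈ P, ∑ i, x i ^ 3 = 0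

/-- The intersection number `Π·Π′ = (1 − (−2)^(dim(Π∩Π′)+1))/3`, in terms of
the linear dimension `d = dim(Π∩Π′)+1` (also valid for `Π = Π′`, where the
excess intersection formula gives `Π·Π = 3`). -/
def icNum (d : ℕ) : ℚ := (1 - (-2 : ℚ) ^ d) / 3


inductive F4 : Type
  | z | o | w | v
  deriving DecidableEq

namespace F4
instance : Fintype F4 := ⟨{z, o, w, v}, fun x => by cases x <;> decide⟩

protected def add : F4 → F4 → F4
  | z, x => x
  | x, z => x
  | o, o => z | w, w => z | v, v => z
  | o, w => v | w, o => v
  | o, v => w | v, o => w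
  | w, v => o | v, w => o

protected def mul : F4 → F4 → F4
  | z, _ => z
  | _, z => z
  | o, x => x
  | x, o => x
  | w, w => v | w, v => o | v, w => o | v, v => w

protected def inv : F4 → F4
  | z => z | o => o | w => v | v => w

instance : Zero F4 := ⟨z⟩
instance : One F4 := ⟨o⟩
instance : Add F4 := ⟨F4.add⟩
instance : Mul F4 := ⟨F4.mul⟩
instance : Neg F4 := ⟨id⟩
instance : Inv F4 := ⟨F4.inv⟩

instance : Field F4 where
  add_assoc := by decide
  zero_add := by decide
  add_zero := by decide
  add_comm := by decide
  mul_assoc := by decide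
  mul_comm := by decide
  one_mul := by decide
  mul_one := by decide
  zero_mul := by decide
  mul_zero := by decide
  left_distrib := by decide
  right_distrib := by decide
  neg_add_cancel := by decide
  exists_pair_ne := ⟨z, o, by decide⟩
  mul_inv_cancel := by decide
  inv_zero := rfl
  nsmul := nsmulRec
  zsmul := zsmulRec
  nnqsmul := _
  qsmul := _

/-- conjugation `x ↦ x²` -/
def cj : F4 →+* F4 where
  toFun x := x * x
  map_one' := by decide
  map_mul' := by decide
  map_zero' := by decide
  map_add' := by decide

/-- an additive character to signs -/
def chi : F4 → ℤ
  | z => 1 | o => -1 | w => 1 | v => -1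

theorem chi_add : ∀ x y : F4, chi (x + y) = chi x * chi y := by decide
theorem cj_cj : ∀ x : F4, cj (cj x) = x := by decide
theorem add_self : ∀ x : F4, x + x = 0 := by decide
theorem eq_of_add : ∀ x y : F4, x + y = 0 → x = y := by decide
theorem cj_fix : ∀ x : F4, cj x = x → x = 0 ∨ x = 1 := by decide
theorem neg_eq : ∀ x : F4, -x = x := by decide
theorem card : Fintype.card F4 = 4 := by decide
end F4

open F4

/-- sesquilinear maps over `F4` -/
structure Sesq {M : Type*} [AddCommGroup M] [Module F4 M] (h : M → M → F4) : Prop where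
  add_left : ∀ x y z, h (x + y) z = h x z + h y z
  smul_left : ∀ (c : F4) x z, h (c • x) z = c * h x z
  add_right : ∀ x y z, h x (y + z) = h x y + h x z
  smul_right : ∀ (c : F4) x z, h x (c • z) = cj c * h x z

namespace Sesq
variable {M : Type*} [AddCommGroup M] [Module F4 M] {h : M → M → F4}

theorem zero_left (hh : Sesq h) (x : M) : h 0 x = 0 := by
  simpa using hh.smul_left 0 0 x

theorem zero_right (hh : Sesq h) (x : M) : h x 0 = 0 := by
  simpa using hh.smul_right 0 x 0

/-- the orthogonal of a subspace -/
def perp (hh : Sesq h) (W : Submodule F4 M) : Submodule F4 M where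
  carrier := {y | ∀ x ∈ W, h x y = 0}
  zero_mem' := fun x _ => hh.zero_right x
  add_mem' := fun {a b} ha hb x hx => by rw [hh.add_right, ha x hx, hb x hx, add_zero]
  smul_mem' := fun c a ha x hx => by rw [hh.smul_right, ha x hx, mul_zero]

theorem mem_perp (hh : Sesq h) (W : Submodule F4 M) (y : M) :
    y ∈ hh.perp W ↔ ∀ x ∈ W, h x y = 0 := Iff.rfl

/-- the functional attached to a vector -/
def toDual (hh : Sesq h) (y : M) : Module.Dual F4 M where
  toFun x := h x y
  map_add' := fun a b => hh.add_left a b y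
  map_smul' := fun c a => by simp [hh.smul_left]

theorem finrank_perp [Finite M] (hh : Sesq h)
    (hs : ∀ g : Module.Dual F4 M, ∃ y, ∀ x, g x = h x y) (W : Submodule F4 M) :
    Module.finrank F4 W + Module.finrank F4 (hh.perp W) = Module.finrank F4 M := by
  have : Module.Finite F4 M := Module.Finite.of_finite
  have hfin : Finite (Module.Dual F4 M) := Module.finite_of_finite F4
  have hsurj : Function.Surjective hh.toDual := by
    intro g
    obtain ⟨y, hy⟩ := hs g
    exact ⟨y, LinearMap.ext fun x => (hy x).symm⟩
  have hbij : Function.Bijective hh.toDual := by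
    apply hsurj.bijective_of_nat_card_le
    rw [Module.natCard_eq_pow_finrank (K := F4) (V := M),
      Module.natCard_eq_pow_finrank (K := F4) (V := Module.Dual F4 M), Subspace.dual_finrank_eq]
  have key : Nat.card (hh.perp W) = Nat.card W.dualAnnihilator := by
    apply Nat.card_eq_of_bijective
      (fun y : hh.perp W => (⟨hh.toDual y.1, by
        rw [Submodule.mem_dualAnnihilator]; intro x hx; exact y.2 x hx⟩ : W.dualAnnihilator))
    constructor
    · intro a b hab
      exact Subtype.ext (hbij.1 (congrArg Subtype.val hab))
    · intro g
      obtain ⟨y, hy⟩ := hsurj g.1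
      refine ⟨⟨y, fun x hx => ?_⟩, Subtype.ext hy⟩
      have := (Submodule.mem_dualAnnihilator _).1 g.2 x hx
      rw [← hy] at this
      exact this
  have h4 : Nat.card F4 = 4 := by rw [Nat.card_eq_fintype_card, F4.card]
  rw [Module.natCard_eq_pow_finrank (K := F4) (V := hh.perp W),
    Module.natCard_eq_pow_finrank (K := F4) (V := W.dualAnnihilator), h4] at key
  have key' : Module.finrank F4 (hh.perp W) = Module.finrank F4 W.dualAnnihilator :=
    Nat.pow_right_injective (by norm_num : 2 ≤ 4) key
  rw [key']
  exact Subspace.finrank_add_finrank_dualAnnihilator_eq W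

theorem perp_inf [Finite M] (hh : Sesq h)
    (hs : ∀ g : Module.Dual F4 M, ∃ y, ∀ x, g x = h x y) (W W' : Submodule F4 M) (n : M)
    (hn : ∀ x ∈ W ⊓ W', h x n = 0) :
    ∃ a b, a ∈ hh.perp W ∧ b ∈ hh.perp W' ∧ ∀ x, h x n = h x (a + b) := by
  have hm : hh.toDual n ∈ (W ⊓ W').dualAnnihilator := by
    rw [Submodule.mem_dualAnnihilator]; exact hn
  rw [Subspace.dualAnnihilator_inf_eq, Submodule.mem_sup] at hm
  obtain ⟨g, hg, g', hg', hgg⟩ := hm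
  obtain ⟨a, ha⟩ := hs g
  obtain ⟨b, hb⟩ := hs g'
  rw [Submodule.mem_dualAnnihilator] at hg hg'
  refine ⟨a, b, fun x hx => by rw [← ha, hg x hx], fun x hx => by rw [← hb, hg' x hx], fun x => ?_⟩
  rw [hh.add_right, ← ha, ← hb]
  exact (LinearMap.congr_fun hgg x).symm

/-- the radical of `h` on `E` -/
def rad (hh : Sesq h) (E : Submodule F4 M) : Submodule F4 M := E ⊓ hh.perp E

theorem chi_table : ∀ c : F4, chi (c * cj c) = if c = 0 then 1 else -1 := by decide

theorem gauss_aux [Fintype M] (hh : Sesq h) : ∀ (n : ℕ) (E : Submodule F4 M) [Fintype E],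
    Module.finrank F4 E = n → (∀ x ∈ E, ∀ y ∈ E, h y x = cj (h x y)) →
    ∑ x : E, chi (h x.1 x.1) = (-2 : ℤ) ^ (n + Module.finrank F4 (hh.rad E)) := by
  have : Module.Finite F4 M := Module.Finite.of_finite
  have h4 : Fintype.card F4 = 4 := F4.card
  intro n
  induction n with
  | zero =>
    intro E _ hE hherm
    have hE0 : E = ⊥ := Submodule.finrank_eq_zero.1 hE
    subst hE0
    have : hh.rad (⊥ : Submodule F4 M) = ⊥ := by simp [rad]
    rw [this]
    have h1 : ∀ x : (⊥ : Submodule F4 M), chi (h x.1 x.1) = 1 := by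
      intro x
      rw [(Submodule.mem_bot F4).1 x.2, hh.zero_left]; rfl
    simp [h1, finrank_bot]
  | succ n ih =>
    intro E _ hE hherm
    by_cases hz : ∀ x ∈ E, h x x = 0
    · have h0 : ∀ x ∈ E, ∀ y ∈ E, h x y = 0 := by
        intro x hx y hy
        have key : ∀ c : F4, cj c * h x y + c * cj (h x y) = 0 := by
          intro c
          have := hz _ (E.add_mem hx (E.smul_mem c hy))
          rw [hh.add_left, hh.add_right, hh.add_right, hh.smul_left, hh.smul_right, hh.smul_left,
            hh.smul_right, hz x hx, hz y hy, hherm x hx y hy] at this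
          simpa using this
        have : ∀ a : F4, (∀ c : F4, cj c * a + c * cj a = 0) → a = 0 := by decide
        exact this _ key
      have hr : hh.rad E = E := by
        rw [rad, inf_eq_left]
        intro y hy x hx
        exact h0 x hx y hy
      rw [hr, hE]
      have : ∀ x : E, chi (h x.1 x.1) = 1 := fun x => by rw [hz x.1 x.2]; rfl
      simp only [this, Finset.sum_const, Finset.card_univ, nsmul_eq_mul, mul_one]
      rw [Module.card_eq_pow_finrank (K := F4), h4, hE, ← two_mul, pow_mul]
      norm_num
    · push Not at hz
      obtain ⟨e, he, hee⟩ := hz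
      have he1 : h e e = 1 := by
        rcases cj_fix _ (hherm e he e he).symm with h1 | h1
        · exact absurd h1 hee
        · exact h1
      let E' : Submodule F4 M := E ⊓ LinearMap.ker (hh.toDual e)
      have memE' : ∀ x, x ∈ E' ↔ x ∈ E ∧ h x e = 0 := fun x => Iff.rfl
      have hE'E : E' ≤ E := inf_le_left
      have herm' : ∀ x ∈ E', ∀ y ∈ E', h y x = cj (h x y) :=
        fun x hx y hy => hherm x (hE'E hx) y (hE'E hy)
      classical
      have hex : ∀ x ∈ E', h e x = 0 := by
        intro x hx
        rw [hherm x (hE'E hx) e he, ((memE' x).1 hx).2, map_zero]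
      -- the bijection
      let f : F4 × E' → E := fun p => ⟨p.1 • e + p.2.1, E.add_mem (E.smul_mem _ he) (hE'E p.2.2)⟩
      have hfe : ∀ p : F4 × E', h (p.1 • e + p.2.1) e = p.1 := by
        intro p
        rw [hh.add_left, hh.smul_left, he1, ((memE' _).1 p.2.2).2, mul_one, add_zero]
      have hf : Function.Bijective f := by
        constructor
        · intro p q hpq
          have hpq' : p.1 • e + p.2.1 = q.1 • e + q.2.1 := congrArg Subtype.val hpq
          have h1 : p.1 = q.1 := by rw [← hfe p, hpq', hfe q]
          rw [h1] at hpq'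
          exact Prod.ext h1 (Subtype.ext (add_left_cancel hpq'))
        · intro x
          refine ⟨(h x.1 e, ⟨x.1 - (h x.1 e) • e, ?_⟩), ?_⟩
          · rw [memE']
            refine ⟨E.sub_mem x.2 (E.smul_mem _ he), ?_⟩
            have := hh.add_left (x.1 - (h x.1 e) • e) ((h x.1 e) • e) e
            rw [sub_add_cancel, hh.smul_left, he1, mul_one] at this
            simpa using this
          · apply Subtype.ext
            simp [f]
      have hcard : Module.finrank F4 E' = n := by
        have := Fintype.card_of_bijective hf
        rw [Fintype.card_prod, Module.card_eq_pow_finrank (K := F4) (V := E'),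
          Module.card_eq_pow_finrank (K := F4) (V := E), h4, hE, ← pow_succ'] at this
        have := Nat.pow_right_injective (le_refl 2 |>.trans (by norm_num : 2 ≤ 4)) this
        omega
      have hrad : hh.rad E' = hh.rad E := by
        ext y
        simp only [rad, Submodule.mem_inf, mem_perp, memE']
        constructor
        · rintro ⟨⟨hy, hye⟩, hp⟩
          refine ⟨hy, fun x hx => ?_⟩
          obtain ⟨p, hp'⟩ := hf.2 ⟨x, hx⟩
          have hx' : p.1 • e + p.2.1 = x := congrArg Subtype.val hp'
          rw [← hx', hh.add_left, hh.smul_left, hex y ⟨hy, hye⟩, hp p.2.1 p.2.2, mul_zero, add_zero]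
        · rintro ⟨hy, hp⟩
          refine ⟨⟨hy, ?_⟩, fun x hx => hp x hx.1⟩
          rw [hherm e he y hy, hp e he, map_zero]
      rw [← hrad, ← Function.Bijective.sum_comp hf (fun x : E => chi (h x.1 x.1))]
      have hval : ∀ p : F4 × E', chi (h (f p).1 (f p).1) = chi (p.1 * cj p.1) * chi (h p.2.1 p.2.1) := by
        intro p
        rw [← chi_add]
        congr 1
        change h (p.1 • e + p.2.1) (p.1 • e + p.2.1) = _
        rw [hh.add_right, hh.smul_right, hfe, hh.add_left, hh.smul_left, hex _ p.2.2]
        ring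
      simp only [hval]
      rw [Fintype.sum_prod_type]
      simp only [← Finset.mul_sum]
      rw [← Finset.sum_mul, ih E' hcard herm']
      have : ∑ c : F4, chi (c * cj c) = -2 := by decide
      rw [this]
      ring

theorem gauss [Fintype M] (hh : Sesq h) (E : Submodule F4 M) [Fintype E]
    (hE : ∀ x ∈ E, ∀ y ∈ E, h y x = cj (h x y)) :
    ∑ x : E, chi (h x.1 x.1)
      = (-2 : ℤ) ^ (Module.finrank F4 E + Module.finrank F4 (hh.rad E)) :=
  gauss_aux hh _ E rfl hE
end Sesq

open F4

abbrev V3 := Fin 3 → F4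
abbrev VV := V3 × V3

/-- the standard Hermitian form on `F4³` -/
def sd (u v : V3) : F4 := ∑ i, u i * cj (v i)

theorem sd_sesq : Sesq sd where
  add_left x y z := by simp [sd, add_mul, Finset.sum_add_distrib]
  smul_left c x z := by simp [sd, Finset.mul_sum, mul_assoc]
  add_right x y z := by simp [sd, mul_add, Finset.sum_add_distrib]
  smul_right c x z := by simp [sd, Finset.mul_sum, mul_left_comm]

theorem cj_sd (u v : V3) : cj (sd u v) = sd v u := by
  simp [sd, map_sum, cj_cj, mul_comm]

theorem sd_surj (g : Module.Dual F4 V3) : ∃ y, ∀ x, g x = sd x y := by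
  refine ⟨fun i => cj (g (Pi.single i 1)), fun x => ?_⟩
  rw [LinearMap.pi_apply_eq_sum_univ g x]
  simp only [sd, cj_cj, smul_eq_mul]
  refine Finset.sum_congr rfl fun i _ => ?_
  congr 2
  ext j
  simp [Pi.single_apply, eq_comm]

/-- the hyperbolic Hermitian form on `F4⁶` -/
def hV (x y : VV) : F4 := sd x.1 y.2 + sd x.2 y.1

theorem hV_sesq : Sesq hV where
  add_left x y z := by simp only [hV, Prod.fst_add, Prod.snd_add, sd_sesq.add_left]; ring
  smul_left c x z := by simp only [hV, Prod.smul_fst, Prod.smul_snd, sd_sesq.smul_left]; ring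
  add_right x y z := by simp only [hV, Prod.fst_add, Prod.snd_add, sd_sesq.add_right]; ring
  smul_right c x z := by simp only [hV, Prod.smul_fst, Prod.smul_snd, sd_sesq.smul_right]; ring

theorem hV_surj (g : Module.Dual F4 VV) : ∃ y, ∀ x, g x = hV x y := by
  obtain ⟨y2, h2⟩ := sd_surj (g.comp (LinearMap.inl F4 V3 V3))
  obtain ⟨y1, h1⟩ := sd_surj (g.comp (LinearMap.inr F4 V3 V3))
  refine ⟨(y1, y2), fun x => ?_⟩
  rw [hV, ← h1, ← h2]
  simp [← map_add]

/-- Lagrangian subspaces -/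
structure IsLag (L : Submodule F4 VV) : Prop where
  rk : Module.finrank F4 L = 3
  iso : ∀ x ∈ L, ∀ y ∈ L, hV x y = 0

theorem finrank_V3 : Module.finrank F4 V3 = 3 := by simp
theorem finrank_VV : Module.finrank F4 VV = 6 := by simp

theorem iso_finrank_le (L : Submodule F4 VV) (iso : ∀ x ∈ L, ∀ y ∈ L, hV x y = 0) :
    Module.finrank F4 L ≤ 3 := by
  have h1 := hV_sesq.finrank_perp hV_surj L
  have h2 : L ≤ hV_sesq.perp L := fun y hy x hx => iso x hx y hy
  have h3 := Submodule.finrank_mono h2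
  rw [finrank_VV] at h1
  omega

theorem IsLag.perp_eq {L : Submodule F4 VV} (hL : IsLag L) : L = hV_sesq.perp L := by
  have h1 := hV_sesq.finrank_perp hV_surj L
  have h2 : L ≤ hV_sesq.perp L := fun y hy x hx => hL.iso x hx y hy
  apply Submodule.eq_of_le_of_finrank_eq h2
  rw [finrank_VV] at h1
  have := hL.rk
  omega

/-- projection of `L` to the first factor -/
def Ul (L : Submodule F4 VV) : Submodule F4 V3 := L.map (LinearMap.fst F4 V3 V3)
/-- intersection of `L` with the second factor -/
def V0 (L : Submodule F4 VV) : Submodule F4 V3 := L.comap (LinearMap.inr F4 V3 V3)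
/-- dimension of the intersection with the second factor -/
noncomputable def aL (L : Submodule F4 VV) : ℕ := Module.finrank F4 (V0 L)

theorem mem_Ul {L : Submodule F4 VV} {u : V3} : u ∈ Ul L ↔ ∃ v, (u, v) ∈ L := by
  simp [Ul]

theorem mem_V0 {L : Submodule F4 VV} {v : V3} : v ∈ V0 L ↔ (0, v) ∈ L := by
  simp [V0]

theorem IsLag.V0_eq {L : Submodule F4 VV} (hL : IsLag L) : V0 L = sd_sesq.perp (Ul L) := by
  ext v
  rw [mem_V0, Sesq.mem_perp]
  constructor
  · intro hv u hu
    obtain ⟨w, hw⟩ := mem_Ul.1 hu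
    simpa [hV, sd_sesq.zero_right] using hL.iso _ hw _ hv
  · intro h
    rw [hL.perp_eq]
    intro x hx
    simpa [hV, sd_sesq.zero_right] using h x.1 (mem_Ul.2 ⟨x.2, hx⟩)

theorem IsLag.a_add {L : Submodule F4 VV} (hL : IsLag L) :
    Module.finrank F4 (Ul L) + aL L = 3 := by
  rw [aL, hL.V0_eq, sd_sesq.finrank_perp sd_surj, finrank_V3]

theorem finrank_map_add {F M N : Type*} [Field F] [AddCommGroup M] [Module F M] [AddCommGroup N]
    [Module F N] [FiniteDimensional F M] (f : M →ₗ[F] N) (E : Submodule F M) :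
    Module.finrank F (E.map f) + Module.finrank F (E ⊓ LinearMap.ker f : Submodule F M)
      = Module.finrank F E := by
  have h := LinearMap.finrank_range_add_finrank_ker (f.domRestrict E)
  have h1 : LinearMap.range (f.domRestrict E) = E.map f := LinearMap.range_domRestrict E f
  have h2 : (LinearMap.ker (f.domRestrict E)).map E.subtype = E ⊓ LinearMap.ker f := by
    ext x; simp [and_comm]
  rw [← h, h1, ← h2]
  congr 1
  exact (Submodule.equivMapOfInjective E.subtype E.injective_subtype _).finrank_eq.symm

theorem finrank_map_inj {F M N : Type*} [Field F] [AddCommGroup M] [Module F M] [AddCommGroup N]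
    [Module F N] (f : M →ₗ[F] N) (hf : Function.Injective f) (E : Submodule F M) :
    Module.finrank F (E.map f) = Module.finrank F E :=
  (Submodule.equivMapOfInjective f hf E).finrank_eq.symm

theorem finrank_subprod {F M N : Type*} [Field F] [AddCommGroup M] [Module F M] [AddCommGroup N]
    [Module F N] [FiniteDimensional F M] [FiniteDimensional F N] (p : Submodule F M)
    (q : Submodule F N) :
    Module.finrank F (p.prod q) = Module.finrank F p + Module.finrank F q := by
  rw [← finrank_map_add (LinearMap.fst F M N) (p.prod q)]
  have h1 : (p.prod q).map (LinearMap.fst F M N) = p := by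
    ext x
    simp only [Submodule.mem_map, Submodule.mem_prod, LinearMap.fst_apply]
    constructor
    · rintro ⟨y, ⟨h, -⟩, rfl⟩
      exact h
    · intro h
      exact ⟨(x, 0), ⟨h, q.zero_mem⟩, rfl⟩
  have h2 : p.prod q ⊓ LinearMap.ker (LinearMap.fst F M N) = q.map (LinearMap.inr F M N) := by
    ext x
    simp only [Submodule.mem_map, Submodule.mem_inf, Submodule.mem_prod, LinearMap.mem_ker,
      LinearMap.fst_apply]
    constructor
    · rintro ⟨⟨-, h⟩, h0⟩
      exact ⟨x.2, h, Prod.ext h0.symm rfl⟩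
    · rintro ⟨y, h, rfl⟩
      exact ⟨⟨p.zero_mem, h⟩, rfl⟩
  rw [h1, h2, finrank_map_inj _ LinearMap.inr_injective]

/-- pairs with the same first component -/
def EE (L L' : Submodule F4 VV) : Submodule F4 (VV × VV) where
  carrier := {x | x.1 ∈ L ∧ x.2 ∈ L' ∧ x.1.1 = x.2.1}
  zero_mem' := ⟨L.zero_mem, L'.zero_mem, rfl⟩
  add_mem' := fun {a b} ha hb => ⟨L.add_mem ha.1 hb.1, L'.add_mem ha.2.1 hb.2.1, by
    simp [ha.2.2, hb.2.2]⟩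
  smul_mem' := fun c a ha => ⟨L.smul_mem c ha.1, L'.smul_mem c ha.2.1, by simp [ha.2.2]⟩

theorem mem_EE {L L' : Submodule F4 VV} {x : VV × VV} :
    x ∈ EE L L' ↔ x.1 ∈ L ∧ x.2 ∈ L' ∧ x.1.1 = x.2.1 := Iff.rfl

/-- first component of a pair -/
def uMap : VV × VV →ₗ[F4] V3 := (LinearMap.fst F4 V3 V3).comp (LinearMap.fst F4 VV VV)
/-- sum of the second components of a pair -/
def wMap : VV × VV →ₗ[F4] V3 :=
  (LinearMap.snd F4 V3 V3).comp (LinearMap.fst F4 VV VV)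
    + (LinearMap.snd F4 V3 V3).comp (LinearMap.snd F4 VV VV)

theorem uMap_apply (x : VV × VV) : uMap x = x.1.1 := rfl
theorem wMap_apply (x : VV × VV) : wMap x = x.1.2 + x.2.2 := rfl

/-- the form on pairs -/
def hE (x y : VV × VV) : F4 := sd (uMap x) (wMap y)

theorem hE_sesq : Sesq hE where
  add_left x y z := by simp only [hE, map_add, sd_sesq.add_left]
  smul_left c x z := by simp only [hE, map_smul, sd_sesq.smul_left]
  add_right x y z := by simp only [hE, map_add, sd_sesq.add_right]
  smul_right c x z := by simp only [hE, map_smul, sd_sesq.smul_right]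

theorem V3_eq_of_add {a b : V3} (h : a + b = 0) : a = b := by
  ext i
  exact eq_of_add _ _ (congrFun h i)

theorem V3_add_self (a : V3) : a + a = 0 := by
  ext i
  exact F4.add_self _

section ip
variable {L L' : Submodule F4 VV}

theorem hE_herm (hL : IsLag L) (hL' : IsLag L') :
    ∀ x ∈ EE L L', ∀ y ∈ EE L L', hE y x = cj (hE x y) := by
  rintro x ⟨h1, h2, h3⟩ y ⟨h4, h5, h6⟩
  have e1 := hL.iso _ h4 _ h1
  have e2 := hL'.iso _ h5 _ h2
  simp only [hV] at e1 e2
  simp only [hE, uMap_apply, wMap_apply, sd_sesq.add_right, map_add, cj_sd]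
  rw [eq_of_add _ _ e1, h6, eq_of_add _ _ e2, h3]

theorem finrank_EE (_hL : IsLag L) (_hL' : IsLag L') :
    Module.finrank F4 (EE L L') =
      Module.finrank F4 (Ul L ⊓ Ul L' : Submodule F4 V3) + (aL L + aL L') := by
  rw [← finrank_map_add uMap (EE L L')]
  congr 1
  · have : (EE L L').map uMap = Ul L ⊓ Ul L' := by
      ext u
      rw [Submodule.mem_map, Submodule.mem_inf, mem_Ul, mem_Ul]
      constructor
      · rintro ⟨x, ⟨h1, h2, h3⟩, rfl⟩
        refine ⟨⟨x.1.2, h1⟩, ⟨x.2.2, ?_⟩⟩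
        rw [uMap_apply, h3]
        exact h2
      · rintro ⟨⟨v, hv⟩, ⟨v', hv'⟩⟩
        exact ⟨((u, v), (u, v')), ⟨hv, hv', rfl⟩, rfl⟩
    rw [this]
  · let f : V3 × V3 →ₗ[F4] VV × VV :=
      (LinearMap.inr F4 V3 V3).prodMap (LinearMap.inr F4 V3 V3)
    have hf : Function.Injective f := by
      intro a b hab
      simp only [f, LinearMap.prodMap_apply, LinearMap.inr_apply, Prod.mk.injEq, true_and] at hab
      exact Prod.ext hab.1 hab.2
    have : EE L L' ⊓ LinearMap.ker uMap = ((V0 L).prod (V0 L')).map f := by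
      ext x
      rw [Submodule.mem_map, Submodule.mem_inf, LinearMap.mem_ker, mem_EE, uMap_apply]
      constructor
      · rintro ⟨⟨h1, h2, h3⟩, h4⟩
        obtain ⟨⟨u, v⟩, ⟨u', v'⟩⟩ := x
        simp only at h1 h2 h3 h4
        subst h4
        subst h3
        exact ⟨(v, v'), ⟨mem_V0.2 h1, mem_V0.2 h2⟩, rfl⟩
      · rintro ⟨⟨v, v'⟩, ⟨h1, h2⟩, rfl⟩
        exact ⟨⟨mem_V0.1 h1, mem_V0.1 h2, rfl⟩, rfl⟩
    rw [this, finrank_map_inj f hf, finrank_subprod, aL, aL]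

theorem finrank_radE (hL : IsLag L) (hL' : IsLag L') :
    Module.finrank F4 (hE_sesq.rad (EE L L')) + Module.finrank F4 (Ul L ⊓ Ul L' : Submodule F4 V3)
      = 3 + Module.finrank F4 (L ⊓ L' : Submodule F4 VV) := by
  rw [← finrank_map_add wMap (hE_sesq.rad (EE L L'))]
  have h1 : (hE_sesq.rad (EE L L')).map wMap = sd_sesq.perp (Ul L ⊓ Ul L') := by
    ext n
    rw [Submodule.mem_map, Sesq.mem_perp]
    constructor
    · rintro ⟨x, ⟨-, h2⟩, rfl⟩ u hu
      obtain ⟨⟨v, hv⟩, ⟨v', hv'⟩⟩ := And.intro (mem_Ul.1 hu.1) (mem_Ul.1 hu.2)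
      exact h2 ((u, v), (u, v')) ⟨hv, hv', rfl⟩
    · intro hn
      obtain ⟨a, b, ha, hb, hab⟩ := sd_sesq.perp_inf sd_surj _ _ n hn
      have hnab : n = a + b := by
        ext i
        have := hab (Pi.single i 1)
        simp only [sd, Pi.single_apply, ite_mul, one_mul, zero_mul, Finset.sum_ite_eq',
          Finset.mem_univ, if_true] at this
        exact (cj_cj _).symm.trans ((congrArg cj this).trans (cj_cj _))
      rw [← hL.V0_eq, mem_V0] at ha
      rw [← hL'.V0_eq, mem_V0] at hb
      refine ⟨((0, a), (0, b)), ⟨⟨ha, hb, rfl⟩, fun x hx => ?_⟩, hnab.symm⟩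
      change sd x.1.1 (a + b) = 0
      rw [← hnab]
      refine hn _ ⟨mem_Ul.2 ⟨x.1.2, hx.1⟩, mem_Ul.2 ⟨x.2.2, ?_⟩⟩
      rw [hx.2.2]
      exact hx.2.1
  let f : VV →ₗ[F4] VV × VV := LinearMap.id.prod LinearMap.id
  have hf : Function.Injective f := fun a b hab => congrArg Prod.fst hab
  have h2 : hE_sesq.rad (EE L L') ⊓ LinearMap.ker wMap = (L ⊓ L').map f := by
    ext x
    rw [Submodule.mem_map, Submodule.mem_inf, LinearMap.mem_ker, wMap_apply]
    constructor
    · rintro ⟨⟨⟨h1, h2, h3⟩, -⟩, h4⟩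
      have : x.1 = x.2 := Prod.ext h3 (V3_eq_of_add h4)
      refine ⟨x.1, ⟨h1, by rw [this]; exact h2⟩, Prod.ext rfl this⟩
    · rintro ⟨y, ⟨h1, h2⟩, rfl⟩
      have : (f y).1.2 + (f y).2.2 = 0 := V3_add_self y.2
      refine ⟨⟨⟨h1, h2, rfl⟩, fun z _ => ?_⟩, this⟩
      change sd _ ((f y).1.2 + (f y).2.2) = 0
      rw [this, sd_sesq.zero_right]
  rw [h1, h2, finrank_map_inj f hf]
  have := sd_sesq.finrank_perp sd_surj (Ul L ⊓ Ul L')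
  rw [finrank_V3] at this
  omega
end ip

open F4

open Classical in
/-- sign function of a Lagrangian -/
noncomputable def eta (L : Submodule F4 VV) (u : V3) : ℤ :=
  if h : ∃ v, (u, v) ∈ L then chi (sd u h.choose) else 0

theorem eta_eq {L : Submodule F4 VV} (hL : IsLag L) {u v : V3} (h : (u, v) ∈ L) :
    eta L u = chi (sd u v) := by
  have hex : ∃ v, (u, v) ∈ L := ⟨v, h⟩
  rw [eta, dif_pos hex]
  have h0 : (0, hex.choose - v) ∈ L := by
    have := L.sub_mem hex.choose_spec h
    simpa using this
  have h1 : sd u (hex.choose - v) = 0 := by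
    rw [← mem_V0, hL.V0_eq] at h0
    exact h0 u (mem_Ul.2 hex)
  have h2 := sd_sesq.add_right u (hex.choose - v) v
  rw [sub_add_cancel, h1, zero_add] at h2
  rw [h2]

theorem eta_zero {L : Submodule F4 VV} {u : V3} (h : u ∉ Ul L) : eta L u = 0 := by
  rw [mem_Ul] at h
  rw [eta, dif_neg h]

theorem eta_at_zero {L : Submodule F4 VV} (hL : IsLag L) : eta L 0 = 1 := by
  rw [eta_eq hL (v := 0) L.zero_mem, sd_sesq.zero_left]; rfl

theorem eta_smul {L : Submodule F4 VV} (hL : IsLag L) {c : F4} (hc : c ≠ 0) (u : V3) :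
    eta L (c • u) = eta L u := by
  by_cases h : u ∈ Ul L
  · obtain ⟨v, hv⟩ := mem_Ul.1 h
    rw [eta_eq hL hv, eta_eq hL (v := c • v) (L.smul_mem c hv), sd_sesq.smul_left,
      sd_sesq.smul_right, ← mul_assoc]
    have : ∀ c : F4, c ≠ 0 → c * cj c = 1 := by decide
    rw [this c hc, one_mul]
  · rw [eta_zero h, eta_zero]
    rwa [Submodule.smul_mem_iff _ hc]

open Classical in
theorem theta_eq {L : Submodule F4 VV} (hL : IsLag L) (u : V3) :
    ∑ v : V3, (if (u, v) ∈ L then chi (sd u v) else 0) = 4 ^ aL L * eta L u := by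
  by_cases h : u ∈ Ul L
  · obtain ⟨v0, hv0⟩ := mem_Ul.1 h
    have h1 : ∀ v : V3, (if (u, v) ∈ L then chi (sd u v) else 0)
        = if (u, v) ∈ L then eta L u else 0 := by
      intro v
      split_ifs with hv
      · rw [eta_eq hL hv]
      · rfl
    simp only [h1]
    rw [← Equiv.sum_comp (Equiv.addRight v0)]
    have h2 : ∀ v : V3, (u, (Equiv.addRight v0) v) ∈ L ↔ v ∈ V0 L := by
      intro v
      have h3 : (u, (Equiv.addRight v0) v) = ((0, v) : VV) + (u, v0) := by simp
      rw [mem_V0, h3, Submodule.add_mem_iff_left L hv0]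
    simp only [h2]
    rw [← Finset.sum_filter, Finset.sum_const, nsmul_eq_mul]
    congr 1
    rw [← Fintype.card_subtype]
    have h3 := Module.card_eq_pow_finrank (K := F4) (V := V0 L)
    rw [F4.card] at h3
    rw [aL]
    exact_mod_cast h3
  · rw [eta_zero h, mul_zero]
    apply Finset.sum_eq_zero
    intro v _
    rw [if_neg]
    intro hv
    exact h (mem_Ul.2 ⟨v, hv⟩)

theorem sum_eta {L L' : Submodule F4 VV} (hL : IsLag L) (hL' : IsLag L') :
    4 ^ (aL L + aL L') * ∑ u : V3, eta L u * eta L' u =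
      (-2 : ℤ) ^ (3 + Module.finrank F4 (L ⊓ L' : Submodule F4 VV) + (aL L + aL L')) := by
  classical
  have h1 := finrank_EE hL hL'
  have h2 := finrank_radE hL hL'
  have h3 := hE_sesq.gauss (EE L L') (hE_herm hL hL')
  have h4 : Module.finrank F4 (EE L L') + Module.finrank F4 (hE_sesq.rad (EE L L'))
    = 3 + Module.finrank F4 (L ⊓ L' : Submodule F4 VV) + (aL L + aL L') := by omega
  rw [h4] at h3
  rw [← h3]
  have h5 : ∑ x : EE L L', chi (hE x.1 x.1)
      = ∑ x : VV × VV, if x ∈ EE L L' then chi (hE x x) else 0 := by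
    rw [← Finset.sum_filter]
    exact (Finset.sum_subtype _ (by simp) (fun x => chi (hE x x))).symm
  rw [h5, Fintype.sum_prod_type, Fintype.sum_prod_type, Finset.mul_sum]
  refine Finset.sum_congr rfl fun u _ => ?_
  have h6 : (4 : ℤ) ^ (aL L + aL L') * (eta L u * eta L' u)
      = (4 ^ aL L * eta L u) * (4 ^ aL L' * eta L' u) := by ring
  rw [h6, ← theta_eq hL, ← theta_eq hL', Finset.sum_mul]
  refine Finset.sum_congr rfl fun v _ => ?_
  symm
  rw [Fintype.sum_prod_type, Finset.sum_eq_single u]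
  · rw [Finset.mul_sum]
    refine Finset.sum_congr rfl fun v' _ => ?_
    simp only [mem_EE, and_true, hE, uMap_apply, wMap_apply, sd_sesq.add_right, chi_add]
    by_cases ha : (u, v) ∈ L <;> by_cases hb : (u, v') ∈ L' <;> simp [ha, hb]
  · intro u' _ hu'
    apply Finset.sum_eq_zero
    intro v' _
    rw [if_neg]
    rintro ⟨-, -, h⟩
    exact hu' h.symm
  · intro h; exact absurd (Finset.mem_univ _) h

/-- the element of `F4` with a given code -/
def f4 : ℕ → F4
  | 0 => z | 1 => o | 2 => w | _ => v

/-- representatives of the 21 points of `P²(F4)` -/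
def pt (p : Fin 21) : V3 :=
  if p.val < 16 then ![o, f4 (p.val / 4), f4 (p.val % 4)]
  else if p.val < 20 then ![z, o, f4 (p.val - 16)] else ![z, z, o]

/-- all vectors -/
def allv : Option (Fin 21 × Fin 3) → V3
  | none => 0
  | some (p, k) => f4 (k.val + 1) • pt p

theorem allv_bij : Function.Bijective allv := by
  rw [Fintype.bijective_iff_injective_and_card]
  refine ⟨?_, by simp [F4.card]⟩
  decide +kernel

theorem sum_points (f : V3 → ℤ) (hf : ∀ (c : F4) u, c ≠ 0 → f (c • u) = f u) :
    ∑ u, f u = f 0 + 3 * ∑ p, f (pt p) := by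
  rw [← allv_bij.sum_comp, Fintype.sum_option, Fintype.sum_prod_type, Finset.mul_sum]
  congr 1
  refine Finset.sum_congr rfl fun p _ => ?_
  have : ∀ k : Fin 3, f (allv (some (p, k))) = f (pt p) := by
    intro k
    apply hf
    revert k; decide
  simp [this]

/-- the vector attached to a Lagrangian -/
noncomputable def TL (L : Submodule F4 VV) (j : Fin 24) : ℤ :=
  if h : j.val < 21 then (-2) ^ aL L * eta L (pt ⟨j.val, h⟩)
  else if j.val = 23 then -((8 + (-2) ^ aL L) / 3) else (4 - (-2) ^ aL L) / 3

theorem sum24 (f : Fin 24 → ℤ) :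
    ∑ j, f j = ∑ p : Fin 21, f ⟨p.val, by omega⟩ + f 21 + f 22 + f 23 := by
  rw [Fin.sum_univ_castSucc, Fin.sum_univ_castSucc, Fin.sum_univ_castSucc]
  rfl

theorem a_le (L : Submodule F4 VV) : aL L ≤ 3 := by
  have := Submodule.finrank_le (V0 L)
  rwa [finrank_V3] at this

theorem tail_mul {a : ℕ} (ha : a ≤ 3) :
    3 * ((4 - (-2 : ℤ) ^ a) / 3) = 4 - (-2) ^ a ∧ 3 * ((8 + (-2 : ℤ) ^ a) / 3) = 8 + (-2) ^ a := by
  interval_cases a <;> decide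

theorem TL_pt (L : Submodule F4 VV) (p : Fin 21) :
    TL L ⟨p.val, by omega⟩ = (-2) ^ aL L * eta L (pt p) := by
  rw [TL, dif_pos p.2]

theorem TL_21 (L : Submodule F4 VV) : TL L 21 = (4 - (-2) ^ aL L) / 3 := by
  rw [TL, dif_neg (by decide), if_neg (by decide)]
theorem TL_22 (L : Submodule F4 VV) : TL L 22 = (4 - (-2) ^ aL L) / 3 := by
  rw [TL, dif_neg (by decide), if_neg (by decide)]
theorem TL_23 (L : Submodule F4 VV) : TL L 23 = -((8 + (-2) ^ aL L) / 3) := by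
  rw [TL, dif_neg (by decide), if_pos (by decide)]

theorem ip_formula {L L' : Submodule F4 VV} (hL : IsLag L) (hL' : IsLag L') :
    3 * ∑ j, TL L j * TL L' j
      = 32 - 8 * (-2 : ℤ) ^ (Module.finrank F4 (L ⊓ L' : Submodule F4 VV)) := by
  rw [sum24]
  simp only [TL_pt, TL_21, TL_22, TL_23]
  have h1 := sum_eta hL hL'
  rw [sum_points (fun u => eta L u * eta L' u)
    (fun c u hc => by simp only [eta_smul hL hc, eta_smul hL' hc]), eta_at_zero hL,
    eta_at_zero hL'] at h1
  obtain ⟨e1, e2⟩ := tail_mul (a_le L)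
  obtain ⟨e3, e4⟩ := tail_mul (a_le L')
  generalize hd : Module.finrank F4 (L ⊓ L' : Submodule F4 VV) = d at *
  set X := ∑ p, eta L (pt p) * eta L' (pt p) with hX
  have h2 : ∑ x, (-2) ^ aL L * eta L (pt x) * ((-2) ^ aL L' * eta L' (pt x))
      = (-2) ^ aL L * (-2) ^ aL L' * X := by
    rw [hX, Finset.mul_sum]
    exact Finset.sum_congr rfl fun p _ => by ring
  rw [h2]
  have h3 : (4 : ℤ) ^ (aL L + aL L') = ((-2) ^ aL L * (-2) ^ aL L') * ((-2) ^ aL L * (-2) ^ aL L') := by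
    rw [← pow_add, ← mul_pow]; norm_num
  rw [h3, pow_add, pow_add, pow_add] at h1
  set s := (-2 : ℤ) ^ aL L
  set s' := (-2 : ℤ) ^ aL L'
  have hs : s * s' ≠ 0 := mul_ne_zero (pow_ne_zero _ (by norm_num)) (pow_ne_zero _ (by norm_num))
  have h4 : s * s' * (1 + 3 * X) = (-2) ^ 3 * (-2) ^ d := by
    apply mul_left_cancel₀ hs
    linear_combination h1
  set x1 := (4 - s) / 3
  set x2 := (8 + s) / 3
  set y1 := (4 - s') / 3
  set y2 := (8 + s') / 3
  have h5 : 9 * (x1 * y1) = (4 - s) * (4 - s') := by rw [← e1, ← e3]; ring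
  have h6 : 9 * (x2 * y2) = (8 + s) * (8 + s') := by rw [← e2, ← e4]; ring
  have h7 : 3 * (3 * (s * s' * X + x1 * y1 + x1 * y1 + -x2 * -y2)) = 3 * (32 - 8 * (-2) ^ d) := by
    linear_combination 3 * h4 + 2 * h5 + h6
  linarith

open F4

/-- parity checks of the Golay code -/
def Par (c : Fin 24 → ZMod 2) : Prop :=
  c 7 = c 6 + c 5 + c 4 + c 3 + c 2 + c 1 + c 0 ∧
  c 11 = c 10 + c 9 + c 8 + c 3 + c 2 + c 1 + c 0 ∧
  c 13 = c 12 + c 9 + c 8 + c 5 + c 4 + c 1 + c 0 ∧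
  c 14 = c 12 + c 10 + c 8 + c 6 + c 4 + c 2 + c 0 ∧
  c 15 = c 12 + c 10 + c 9 + c 6 + c 5 + c 3 + c 0 ∧
  c 17 = c 16 + c 9 + c 8 + c 6 + c 4 + c 3 + c 0 ∧
  c 18 = c 16 + c 10 + c 8 + c 6 + c 5 + c 3 + c 2 ∧
  c 19 = c 16 + c 10 + c 9 + c 5 + c 4 + c 3 + c 1 ∧
  c 20 = c 16 + c 12 + c 8 + c 4 + c 3 + c 2 + c 1 ∧
  c 21 = c 16 + c 12 + c 9 + c 6 + c 5 + c 4 + c 2 ∧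
  c 22 = c 16 + c 12 + c 10 + c 5 + c 2 + c 1 + c 0 ∧
  c 23 = c 16 + c 12 + c 10 + c 9 + c 8 + c 6 + c 1

instance (c : Fin 24 → ZMod 2) : Decidable (Par c) := by unfold Par; infer_instance

theorem par_row : ∀ i : Fin 12, Par (fun j => golayMatrix i j) := by decide +kernel

theorem golay_iff (c : Fin 24 → ZMod 2) : c ∈ GolayCode ↔ Par c := by
  constructor
  · intro h
    induction h using Submodule.span_induction with
    | mem x hx => obtain ⟨i, rfl⟩ := hx; exact par_row i
    | zero => decide +kernel
    | add x y _ _ hx hy =>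
      simp only [Par, Pi.add_apply] at hx hy ⊢
      obtain ⟨a1, a2, a3, a4, a5, a6, a7, a8, a9, a10, a11, a12⟩ := hx
      obtain ⟨b1, b2, b3, b4, b5, b6, b7, b8, b9, b10, b11, b12⟩ := hy
      refine ⟨?_, ?_, ?_, ?_, ?_, ?_, ?_, ?_, ?_, ?_, ?_, ?_⟩
      · linear_combination a1 + b1
      · linear_combination a2 + b2
      · linear_combination a3 + b3
      · linear_combination a4 + b4
      · linear_combination a5 + b5
      · linear_combination a6 + b6
      · linear_combination a7 + b7
      · linear_combination a8 + b8
      · linear_combination a9 + b9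
      · linear_combination a10 + b10
      · linear_combination a11 + b11
      · linear_combination a12 + b12
    | smul r x _ hx =>
      simp only [Par, Pi.smul_apply, smul_eq_mul] at hx ⊢
      obtain ⟨a1, a2, a3, a4, a5, a6, a7, a8, a9, a10, a11, a12⟩ := hx
      refine ⟨?_, ?_, ?_, ?_, ?_, ?_, ?_, ?_, ?_, ?_, ?_, ?_⟩
      · linear_combination r * a1
      · linear_combination r * a2
      · linear_combination r * a3
      · linear_combination r * a4
      · linear_combination r * a5
      · linear_combination r * a6
      · linear_combination r * a7
      · linear_combination r * a8
      · linear_combination r * a9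
      · linear_combination r * a10
      · linear_combination r * a11
      · linear_combination r * a12
  · intro h
    have e : c = ∑ r, c (![16, 12, 10, 9, 8, 6, 5, 4, 3, 2, 1, 0] r) • golayMatrix r := by
      simp only [Par] at h
      obtain ⟨a1, a2, a3, a4, a5, a6, a7, a8, a9, a10, a11, a12⟩ := h
      ext j
      rw [Finset.sum_apply]
      simp only [Fin.sum_univ_succ, Finset.univ_eq_empty, Finset.sum_empty, Pi.smul_apply, smul_eq_mul]
      fin_cases j <;> simp [golayMatrix] <;> first | (rw [a1]; ring) | (rw [a2]; ring) | (rw [a3]; ring) | (rw [a4]; ring) | (rw [a5]; ring) | (rw [a6]; ring) | (rw [a7]; ring) | (rw [a8]; ring) | (rw [a9]; ring) | (rw [a10]; ring) | (rw [a11]; ring) | (rw [a12]; ring)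
    rw [e]
    exact Submodule.sum_mem _ fun r _ => Submodule.smul_mem _ _ (Submodule.subset_span ⟨r, rfl⟩)

open F4

/-- the additive map `F4 → F2` underlying `chi` -/
def lam : F4 → ZMod 2
  | z => 0 | o => 1 | w => 0 | v => 1

theorem lam_add : ∀ x y : F4, lam (x + y) = lam x + lam y := by decide

/-- binary word of a function on points, with zero tail -/
def word (f : V3 → F4) (j : Fin 24) : ZMod 2 :=
  if h : j.val < 21 then lam (f (pt ⟨j.val, h⟩)) else 0

theorem word_add (f g : V3 → F4) : word (fun u => f u + g u) = word f + word g := by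
  ext j
  simp only [word, Pi.add_apply]
  split_ifs
  · rw [lam_add]
  · rw [add_zero]

theorem golay_word_diag : ∀ (m : F4) (i : Fin 3), cj m = m →
    Par (word fun u => u i * cj (u i) * m) := by decide +kernel

theorem golay_word_off : ∀ (m : F4) (i j : Fin 3),
    Par (word fun u => u i * cj (u j) * m + u j * cj (u i) * cj m) := by decide +kernel

/-- Hermitian form with matrix `b` -/
def HQ (b : Fin 3 → Fin 3 → F4) (u : V3) : F4 := ∑ i, ∑ j, u i * cj (u j) * b i j

theorem golay_HQ (b : Fin 3 → Fin 3 → F4) (hb : ∀ i j, b j i = cj (b i j)) :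
    word (HQ b) ∈ GolayCode := by
  have e : HQ b = fun u => ((((u 0 * cj (u 0) * b 0 0 + u 1 * cj (u 1) * b 1 1)
      + u 2 * cj (u 2) * b 2 2)
      + (u 0 * cj (u 1) * b 0 1 + u 1 * cj (u 0) * cj (b 0 1)))
      + (u 0 * cj (u 2) * b 0 2 + u 2 * cj (u 0) * cj (b 0 2)))
      + (u 1 * cj (u 2) * b 1 2 + u 2 * cj (u 1) * cj (b 1 2)) := by
    funext u
    rw [← hb 0 1, ← hb 0 2, ← hb 1 2]
    simp only [HQ, Fin.sum_univ_three]
    ring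
  rw [e]
  simp only [word_add]
  have hd : ∀ i, word (fun u => u i * cj (u i) * b i i) ∈ GolayCode := fun i =>
    (golay_iff _).2 (golay_word_diag _ _ (hb i i).symm)
  have ho : ∀ i j, word (fun u => u i * cj (u j) * b i j) +
      word (fun u => u j * cj (u i) * cj (b i j)) ∈ GolayCode := fun i j => by
    rw [← word_add]
    exact (golay_iff _).2 (golay_word_off _ _ _)
  exact add_mem (add_mem (add_mem (add_mem (add_mem (hd 0) (hd 1)) (hd 2)) (ho 0 1)) (ho 0 2)) (ho 1 2)

/-- the octad of the line orthogonal to `n` -/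
def lineWord (n : V3) (j : Fin 24) : ZMod 2 :=
  if h : j.val < 21 then (if sd n (pt ⟨j.val, h⟩) = 0 then 1 else 0) else 1

theorem golay_lineWord : ∀ n : V3, n ≠ 0 → Par (lineWord n) := by decide +kernel

theorem leechInner_int (x y : Fin 24 → ℤ) : leechInner x y = ((∑ i, x i * y i : ℤ) : ℚ) / 8 := by
  simp [leechInner]

theorem vA_expand (T : Fin 24 → ℤ) : ∑ i, (T - vA) i * (T - vA) i
    = ∑ i, T i * T i - 8 * (T 21 - T 23) + 32 := by
  rw [sum24, sum24 (fun i => T i * T i)]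
  have h : ∀ p : Fin 21, vA ⟨p.val, by omega⟩ = 0 := by decide
  have h1 : vA 21 = 4 := by decide
  have h2 : vA 22 = 0 := by decide
  have h3 : vA 23 = -4 := by decide
  simp only [Pi.sub_apply, h, h1, h2, h3, sub_zero]
  ring

theorem vB_expand (T : Fin 24 → ℤ) : ∑ i, (T - vB) i * (T - vB) i
    = ∑ i, T i * T i - 8 * (T 22 - T 23) + 32 := by
  rw [sum24, sum24 (fun i => T i * T i)]
  have h : ∀ p : Fin 21, vB ⟨p.val, by omega⟩ = 0 := by decide
  have h1 : vB 21 = 0 := by decide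
  have h2 : vB 22 = 4 := by decide
  have h3 : vB 23 = -4 := by decide
  simp only [Pi.sub_apply, h, h1, h2, h3, sub_zero]
  ring

theorem mem_TAB_iff (T : Fin 24 → ℤ) : T ∈ TAB ↔
    IsLeech T ∧ ∑ i, T i * T i = 32 ∧ T 21 - T 23 = 4 ∧ T 22 - T 23 = 4 := by
  have h8 : ∀ n : ℤ, (n : ℚ) / 8 = 4 ↔ n = 32 := by
    intro n
    rw [div_eq_iff (by norm_num)]
    norm_num
    exact_mod_cast Iff.rfl
  simp only [TAB, Set.mem_ofPred_eq, leechInner_int, h8, vA_expand, vB_expand]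
  constructor
  · rintro ⟨h1, h2, h3, h4⟩
    exact ⟨h1, h2, by linarith, by linarith⟩
  · rintro ⟨h1, h2, h3, h4⟩
    exact ⟨h1, h2, by linarith, by linarith⟩

/-- the base Lagrangian -/
def Lbase : Submodule F4 VV := Submodule.prod ⊤ ⊥

theorem Lbase_lag : IsLag Lbase := by
  constructor
  · rw [Lbase, finrank_subprod, finrank_top, finrank_bot, finrank_V3]
  · rintro x ⟨-, hx⟩ y ⟨-, hy⟩
    rw [SetLike.mem_coe, Submodule.mem_bot] at hx hy
    simp [hV, hx, hy, sd_sesq.zero_left, sd_sesq.zero_right]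

theorem Lbase_a : aL Lbase = 0 := by
  have h := Lbase_lag.a_add
  have : Ul Lbase = ⊤ := by
    rw [eq_top_iff]
    intro u _
    exact mem_Ul.2 ⟨0, ⟨trivial, rfl⟩⟩
  rw [this, finrank_top, finrank_V3] at h
  omega

theorem Lbase_eta (u : V3) : eta Lbase u = 1 := by
  have : (u, 0) ∈ Lbase := ⟨trivial, rfl⟩
  rw [eta_eq Lbase_lag this, sd_sesq.zero_right]; rfl

theorem ip_div {L L' : Submodule F4 VV} (hL : IsLag L) (hL' : IsLag L') :
    ∃ k : ℤ, ∑ j, TL L j * TL L' j = 8 * k ∧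
      3 * k = 4 - (-2 : ℤ) ^ (Module.finrank F4 (L ⊓ L' : Submodule F4 VV)) := by
  have h := ip_formula hL hL'
  have hd : Module.finrank F4 (L ⊓ L' : Submodule F4 VV) ≤ 3 := by
    exact (Submodule.finrank_mono inf_le_left).trans hL.rk.le
  refine ⟨_, ?_, (tail_mul hd).1⟩
  have := (tail_mul hd).1
  linarith

theorem sum_TL {L : Submodule F4 VV} (hL : IsLag L) :
    ∃ k : ℤ, ∑ j, TL L j = 8 * k + 4 * TL L 23 ∧
      3 * k = 4 - (-2 : ℤ) ^ (Module.finrank F4 (L ⊓ Lbase : Submodule F4 VV)) := by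
  obtain ⟨k, hk, hk'⟩ := ip_div hL Lbase_lag
  refine ⟨k, ?_, hk'⟩
  rw [← hk, sum24, sum24]
  simp only [TL_pt Lbase, Lbase_eta, TL_21 Lbase, TL_22 Lbase, TL_23 Lbase, Lbase_a]
  norm_num
  ring

theorem eta_pm {L : Submodule F4 VV} (hL : IsLag L) {u : V3} (h : u ∈ Ul L) :
    eta L u = 1 ∨ eta L u = -1 := by
  obtain ⟨v, hv⟩ := mem_Ul.1 h
  rw [eta_eq hL hv]
  have : ∀ x : F4, chi x = 1 ∨ chi x = -1 := by decide
  exact this _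

theorem eta_cases {L : Submodule F4 VV} (hL : IsLag L) (u : V3) :
    eta L u = 0 ∨ eta L u = 1 ∨ eta L u = -1 := by
  by_cases h : u ∈ Ul L
  · exact Or.inr (eta_pm hL h)
  · exact Or.inl (eta_zero h)

theorem sd_symm_zero {u v : V3} : sd u v = 0 ↔ sd v u = 0 := by
  rw [← cj_sd v u]
  have : ∀ x : F4, cj x = 0 ↔ x = 0 := by decide
  exact this _

theorem perp_perp (U : Submodule F4 V3) : sd_sesq.perp (sd_sesq.perp U) = U := by
  symm
  apply Submodule.eq_of_le_of_finrank_eq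
  · intro u hu x hx
    rw [sd_symm_zero]
    exact hx u hu
  · have h1 := sd_sesq.finrank_perp sd_surj U
    have h2 := sd_sesq.finrank_perp sd_surj (sd_sesq.perp U)
    omega

/-- `j ↦ v_j` gives the Hermitian matrix of a graph Lagrangian -/
theorem exists_matrix {L : Submodule F4 VV} (hL : IsLag L) (ha : aL L = 0) :
    ∃ b : Fin 3 → Fin 3 → F4, (∀ i j, b j i = cj (b i j)) ∧ ∀ u, eta L u = chi (HQ b u) := by
  have hU : Ul L = ⊤ := by
    apply Submodule.eq_top_of_finrank_eq
    have := hL.a_add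
    rw [finrank_V3]
    omega
  have hv : ∀ j : Fin 3, ∃ v, ((Pi.single j 1 : V3), v) ∈ L := fun j => by
    rw [← mem_Ul, hU]; trivial
  choose v hv using hv
  have hs1 : ∀ (i : Fin 3) (y : V3), sd (Pi.single i 1) y = cj (y i) := by
    intro i y
    simp [sd, Pi.single_apply]
  refine ⟨fun i j => cj (v j i), fun i j => ?_, fun u => ?_⟩
  · have := hL.iso _ (hv i) _ (hv j)
    simp only [hV, hs1] at this
    rw [← cj_sd, hs1, cj_cj] at this
    change cj (v i j) = cj (cj (v j i))
    rw [eq_of_add _ _ this]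
  · have hu : (u, ∑ j, u j • v j) ∈ L := by
      have h1 : (u, ∑ j, u j • v j) = ∑ j, u j • ((Pi.single j 1 : V3), v j) := by
        apply Prod.ext
        · rw [Prod.fst_sum]
          ext i
          simp [Finset.sum_apply, Pi.single_apply]
        · rw [Prod.snd_sum]
          simp
      rw [h1]
      exact L.sum_mem fun j _ => L.smul_mem _ (hv j)
    rw [eta_eq hL hu]
    congr 1
    simp only [sd, HQ, Finset.sum_apply, Pi.smul_apply, smul_eq_mul, map_sum, map_mul, Finset.mul_sum]
    refine Finset.sum_congr rfl fun i _ => Finset.sum_congr rfl fun j _ => by ring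

theorem TL_23_val (L : Submodule F4 VV) :
    (aL L = 0 → TL L 23 = -3) ∧ (aL L = 1 → TL L 23 = -2) ∧ (aL L = 2 → TL L 23 = -4) ∧
    (aL L = 3 → TL L 23 = 0) := by
  rw [TL_23]
  refine ⟨?_, ?_, ?_, ?_⟩ <;> intro h <;> rw [h] <;> decide

theorem TL_diff (L : Submodule F4 VV) : TL L 21 - TL L 23 = 4 ∧ TL L 22 - TL L 23 = 4 := by
  rw [TL_21, TL_22, TL_23]
  obtain ⟨h1, h2⟩ := tail_mul (a_le L)
  constructor <;> linarith

theorem fin24_cases (P : Fin 24 → Prop) (h : ∀ p : Fin 21, P ⟨p.val, by omega⟩) (h1 : P 21)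
    (h2 : P 22) (h3 : P 23) : ∀ j, P j := by
  intro j
  by_cases hj : j.val < 21
  · exact h ⟨j.val, hj⟩
  · have : j = 21 ∨ j = 22 ∨ j = 23 := by omega
    rcases this with rfl | rfl | rfl <;> assumption

theorem TL_golay {L : Submodule F4 VV} (hL : IsLag L) (m : ℤ)
    (hm : m = if aL L = 0 then 1 else 0) :
    (∀ i, (2:ℤ) ∣ (TL L i - m)) ∧
    ((fun i => if (4:ℤ) ∣ (TL L i - m - 2) then (1 : ZMod 2) else 0) ∈ GolayCode) := by
  obtain ⟨t0, t1, t2, t3⟩ := TL_23_val L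
  obtain ⟨e1, e2⟩ := TL_diff L
  have ha := a_le L
  have hcase : aL L = 0 ∨ aL L = 1 ∨ aL L = 2 ∨ aL L = 3 := by omega
  rcases hcase with h | h | h | h
  · have h23 := t0 h
    have h21 : TL L 21 = 1 := by linarith
    have h22 : TL L 22 = 1 := by linarith
    rw [if_pos h] at hm
    subst hm
    obtain ⟨b, hb, hbe⟩ := exists_matrix hL h
    constructor
    · apply fin24_cases
      · intro p
        rw [TL_pt, h, hbe]
        have : ∀ x : F4, (2 : ℤ) ∣ (-2) ^ 0 * chi x - 1 := by decide
        exact this _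
      · rw [h21]; decide
      · rw [h22]; decide
      · rw [h23]; decide
    · convert golay_HQ b hb using 1
      funext j
      revert j
      apply fin24_cases
      · intro p
        rw [TL_pt, h, hbe, word, dif_pos p.2]
        have : ∀ x : F4, (if (4 : ℤ) ∣ (-2) ^ 0 * chi x - 1 - 2 then (1 : ZMod 2) else 0) = lam x := by
          decide
        exact this _
      · rw [h21]; rfl
      · rw [h22]; rfl
      · rw [h23]; rfl
  · have h23 := t1 h
    have h21 : TL L 21 = 2 := by linarith
    have h22 : TL L 22 = 2 := by linarith
    rw [if_neg (by omega)] at hm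
    subst hm
    constructor
    · apply fin24_cases
      · intro p
        rw [TL_pt, h]
        rcases eta_cases hL (pt p) with h | h | h <;> rw [h] <;> decide
      · rw [h21]; decide
      · rw [h22]; decide
      · rw [h23]; decide
    · obtain ⟨n, hn0, hn⟩ := finrank_eq_one_iff'.1 (show Module.finrank F4 (V0 L) = 1 from h)
      have hU : ∀ u, u ∈ Ul L ↔ sd n.1 u = 0 := by
        intro u
        rw [← perp_perp (Ul L), ← hL.V0_eq, Sesq.mem_perp]
        constructor
        · intro h; exact h n.1 n.2
        · intro h x hx
          obtain ⟨c, hc⟩ := hn ⟨x, hx⟩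
          have : x = c • n.1 := (congrArg Subtype.val hc).symm
          rw [this, sd_sesq.smul_left, h, mul_zero]
      have hn0' : n.1 ≠ 0 := fun h => hn0 (Subtype.ext h)
      convert (golay_iff _).2 (golay_lineWord n.1 hn0') using 1
      funext j
      revert j
      apply fin24_cases
      · intro p
        rw [TL_pt, h, lineWord, dif_pos p.2]
        by_cases hp : pt p ∈ Ul L
        · rw [if_pos ((hU _).1 hp)]
          rcases eta_pm hL hp with h | h <;> rw [h] <;> rfl
        · rw [if_neg (fun h => hp ((hU _).2 h)), eta_zero hp]
          rfl
      · rw [h21]; rfl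
      · rw [h22]; rfl
      · rw [h23]; rfl
  all_goals
    have h23 : TL L 23 = -4 ∨ TL L 23 = 0 := by
      first
      | exact Or.inl (t2 h)
      | exact Or.inr (t3 h)
    rw [if_neg (by omega)] at hm
    subst hm
    have h4 : ∀ j, (4 : ℤ) ∣ TL L j := by
      apply fin24_cases
      · intro p
        rw [TL_pt, h]
        exact Dvd.dvd.mul_right (by decide) _
      · omega
      · omega
      · omega
    constructor
    · intro i
      have := h4 i
      omega
    · convert GolayCode.zero_mem using 1
      funext j
      have := h4 j
      rw [if_neg (by omega)]
      rfl

theorem TL_mem {L : Submodule F4 VV} (hL : IsLag L) : TL L ∈ TAB := by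
  rw [mem_TAB_iff]
  obtain ⟨e1, e2⟩ := TL_diff L
  refine ⟨?_, ?_, e1, e2⟩
  · obtain ⟨g1, g2⟩ := TL_golay hL _ rfl
    refine ⟨_, ?_, g1, g2, ?_⟩
    · split_ifs <;> simp
    · obtain ⟨k, hk, -⟩ := sum_TL hL
      rw [hk]
      have h := g1 23
      omega
  · have h := ip_formula hL hL
    rw [inf_idem, hL.rk] at h
    linarith

open F4

/-- the semilinear companion of a Hermitian matrix -/
def Mb (b : Fin 3 → Fin 3 → F4) : V3 →ₗ[F4] V3 where
  toFun u i := ∑ j, u j * cj (b i j)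
  map_add' u u' := by ext i; simp [add_mul, Finset.sum_add_distrib]
  map_smul' c u := by ext i; simp [Finset.mul_sum, mul_assoc]

theorem sd_Mb (b : Fin 3 → Fin 3 → F4) (u u' : V3) :
    sd u (Mb b u') = ∑ i, ∑ j, u i * cj (u' j) * b i j := by
  simp only [sd, Mb, LinearMap.coe_mk, AddHom.coe_mk, map_sum, map_mul, cj_cj, Finset.mul_sum,
    mul_assoc]

theorem sd_Mb' (b : Fin 3 → Fin 3 → F4) (hb : ∀ i j, b j i = cj (b i j)) (u u' : V3) :
    sd (Mb b u) u' = sd u (Mb b u') := by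
  rw [sd_Mb, Finset.sum_comm]
  simp only [sd, Mb, LinearMap.coe_mk, AddHom.coe_mk, Finset.sum_mul]
  refine Finset.sum_congr rfl fun i _ => Finset.sum_congr rfl fun j _ => ?_
  rw [hb i j]; ring

/-- the Lagrangian attached to a subspace and a Hermitian matrix -/
def LU (U : Submodule F4 V3) (b : Fin 3 → Fin 3 → F4) : Submodule F4 VV :=
  U.comap (LinearMap.fst F4 V3 V3) ⊓
    (sd_sesq.perp U).comap (LinearMap.snd F4 V3 V3 + (Mb b).comp (LinearMap.fst F4 V3 V3))

theorem mem_LU {U : Submodule F4 V3} {b : Fin 3 → Fin 3 → F4} {x : VV} :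
    x ∈ LU U b ↔ x.1 ∈ U ∧ ∀ u ∈ U, sd u (x.2 + Mb b x.1) = 0 := Iff.rfl

theorem mem_LU_self {U : Submodule F4 V3} {b : Fin 3 → Fin 3 → F4} {u : V3} (hu : u ∈ U) :
    (u, Mb b u) ∈ LU U b := by
  refine mem_LU.2 ⟨hu, fun u' _ => ?_⟩
  rw [V3_add_self, sd_sesq.zero_right]

theorem Ul_LU (U : Submodule F4 V3) (b : Fin 3 → Fin 3 → F4) : Ul (LU U b) = U := by
  ext u
  rw [mem_Ul]
  exact ⟨fun ⟨_, hy⟩ => (mem_LU.1 hy).1, fun hu => ⟨_, mem_LU_self hu⟩⟩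

theorem LU_lag (U : Submodule F4 V3) (b : Fin 3 → Fin 3 → F4) (hb : ∀ i j, b j i = cj (b i j)) :
    IsLag (LU U b) := by
  constructor
  · rw [← finrank_map_add (LinearMap.fst F4 V3 V3)]
    have h1 : (LU U b).map (LinearMap.fst F4 V3 V3) = U := Ul_LU U b
    have h2 : LU U b ⊓ LinearMap.ker (LinearMap.fst F4 V3 V3)
        = (sd_sesq.perp U).map (LinearMap.inr F4 V3 V3) := by
      ext ⟨u, v⟩
      simp only [Submodule.mem_inf, mem_LU, LinearMap.mem_ker, LinearMap.fst_apply,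
        Submodule.mem_map, LinearMap.inr_apply, Sesq.mem_perp]
      constructor
      · rintro ⟨⟨-, h⟩, rfl⟩
        refine ⟨v, ?_, rfl⟩
        simpa using h
      · rintro ⟨y, h, h'⟩
        obtain ⟨rfl, rfl⟩ := Prod.mk.inj h'
        exact ⟨⟨U.zero_mem, by simpa using h⟩, rfl⟩
    rw [h1, h2, finrank_map_inj _ LinearMap.inr_injective, sd_sesq.finrank_perp sd_surj, finrank_V3]
  · rintro ⟨u, v⟩ hx ⟨u', v'⟩ hy
    obtain ⟨h1, h2⟩ := mem_LU.1 hx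
    obtain ⟨h3, h4⟩ := mem_LU.1 hy
    have e1 := h4 u h1
    have e2 := h2 u' h3
    rw [sd_symm_zero] at e2
    simp only [sd_sesq.add_left, sd_sesq.add_right] at e1 e2
    rw [hV]
    simp only
    rw [eq_of_add _ _ e1, eq_of_add _ _ e2, sd_Mb' b hb, F4.add_self]

theorem eta_LU (U : Submodule F4 V3) (b : Fin 3 → Fin 3 → F4) (hb : ∀ i j, b j i = cj (b i j))
    {u : V3} (hu : u ∈ U) : eta (LU U b) u = chi (HQ b u) := by
  rw [eta_eq (LU_lag U b hb) (mem_LU_self hu), sd_Mb]; rfl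

theorem TL_of (U : Submodule F4 V3) (b : Fin 3 → Fin 3 → F4) (hb : ∀ i j, b j i = cj (b i j))
    (T : Fin 24 → ℤ) (h1 : T 21 - T 23 = 4) (h2 : T 22 - T 23 = 4) (a : ℕ)
    (hU : Module.finrank F4 U + a = 3) (h23 : 3 * T 23 = -(8 + (-2) ^ a))
    (hp : ∀ p : Fin 21, pt p ∈ U → T ⟨p.val, by omega⟩ = (-2) ^ a * chi (HQ b (pt p)))
    (hp' : ∀ p : Fin 21, pt p ∉ U → T ⟨p.val, by omega⟩ = 0) :
    ∃ L, IsLag L ∧ TL L = T := by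
  have hL := LU_lag U b hb
  refine ⟨LU U b, hL, ?_⟩
  have ha : aL (LU U b) = a := by
    have := hL.a_add
    rw [Ul_LU] at this
    omega
  have e23 : TL (LU U b) 23 = T 23 := by
    rw [TL_23, ha]
    have := (tail_mul (show a ≤ 3 by omega)).2
    linarith
  obtain ⟨d1, d2⟩ := TL_diff (LU U b)
  funext j
  revert j
  apply fin24_cases
  · intro p
    rw [TL_pt, ha]
    by_cases h : pt p ∈ U
    · rw [hp p h, eta_LU U b hb h]
    · rw [hp' p h, eta_zero (by rwa [Ul_LU]), mul_zero]
  · linarith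
  · linarith
  · exact e23

theorem HQ_diag (m : F4) (i : Fin 3) (u : V3) :
    HQ (fun i' j' => if i' = i ∧ j' = i then m else 0) u = u i * cj (u i) * m := by
  fin_cases i <;> simp [HQ, Fin.sum_univ_three]

theorem word_zero_of : ∀ c : Fin 24 → ZMod 2, Par c → c 21 = 0 → c 22 = 0 → c 23 = 0 →
    c 0 = 0 → c 16 = 0 → c 20 = 0 → c 4 = 0 → c 8 = 0 → c 1 = 0 → c 2 = 0 → c 17 = 0 → c 18 = 0 →
    c = 0 := by
  intro c h h21 h22 h23 h0 h16 h20 h4 h8 h1 h2 h17 h18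
  simp only [Par, h21, h22, h23, h0, h16, h20, h4, h8, h1, h2, h17, h18, add_zero, zero_add] at h
  obtain ⟨a1, a2, a3, a4, a5, a6, a7, a8, a9, a10, a11, a12⟩ := h
  have key : ∀ x3 x5 x6 x9 x10 x12 : ZMod 2, 0 = x9 + x6 + x3 → 0 = x10 + x6 + x5 + x3 →
      0 = x12 + x3 → 0 = x12 + x9 + x6 + x5 → 0 = x12 + x10 + x5 → 0 = x12 + x10 + x9 + x6 →
      x3 = 0 ∧ x5 = 0 ∧ x6 = 0 ∧ x9 = 0 ∧ x10 = 0 ∧ x12 = 0 := by decide +kernel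
  obtain ⟨b3, b5, b6, b9, b10, b12⟩ := key _ _ _ _ _ _ a6 a7 a9 a10 a11 a12
  simp only [b3, b5, b6, b9, b10, b12, add_zero] at a1 a2 a3 a4 a5 a8
  funext j
  fin_cases j <;> assumption

theorem exists_b (c : Fin 24 → ZMod 2) (hc : c ∈ GolayCode) (h21 : c 21 = 0) (h22 : c 22 = 0)
    (h23 : c 23 = 0) : ∃ b : Fin 3 → Fin 3 → F4, (∀ i j, b j i = cj (b i j)) ∧ c = word (HQ b) := by
  have hd : ∀ s : ZMod 2, ∃ m : F4, m = cj m ∧ lam m = s := by decide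
  have ho : ∀ s t : ZMod 2, ∃ m : F4, lam (m + cj m) = s ∧ lam (v * m + w * cj m) = t := by decide
  obtain ⟨d0, f0, g0⟩ := hd (c 0)
  obtain ⟨d1, f1, g1⟩ := hd (c 16)
  obtain ⟨d2, f2, g2⟩ := hd (c 20)
  obtain ⟨m01, k01, l01⟩ := ho (c 4 + c 0 + c 16) (c 8 + c 0 + c 16)
  obtain ⟨m02, k02, l02⟩ := ho (c 1 + c 0 + c 20) (c 2 + c 0 + c 20)
  obtain ⟨m12, k12, l12⟩ := ho (c 17 + c 16 + c 20) (c 18 + c 16 + c 20)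
  let b : Fin 3 → Fin 3 → F4 := ![![d0, m01, m02], ![cj m01, d1, m12], ![cj m02, cj m12, d2]]
  have hb : ∀ i j, b j i = cj (b i j) := by
    intro i j
    fin_cases i <;> fin_cases j <;> simp [b, cj_cj] <;> assumption
  refine ⟨b, hb, ?_⟩
  have hg := (golay_iff _).1 (add_mem hc (golay_HQ b hb))
  have z2 : ∀ x : ZMod 2, x + x = 0 := by decide
  have e : HQ b = fun u => u 0 * cj (u 0) * d0 + u 1 * cj (u 1) * d1 + u 2 * cj (u 2) * d2
      + (u 0 * cj (u 1) * m01 + u 1 * cj (u 0) * cj m01)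
      + (u 0 * cj (u 2) * m02 + u 2 * cj (u 0) * cj m02)
      + (u 1 * cj (u 2) * m12 + u 2 * cj (u 1) * cj m12) := by
    funext u
    simp only [HQ, Fin.sum_univ_three]
    simp only [b, Matrix.cons_val]
    ring
  have hz : c + word (HQ b) = 0 := by
    have q0 : pt 0 = ![1, 0, 0] := by decide
    have q16 : pt 16 = ![0, 1, 0] := by decide
    have q20 : pt 20 = ![0, 0, 1] := by decide
    have q4 : pt 4 = ![1, 1, 0] := by decide
    have q8 : pt 8 = ![1, w, 0] := by decide
    have q1 : pt 1 = ![1, 0, 1] := by decide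
    have q2 : pt 2 = ![1, 0, w] := by decide
    have q17 : pt 17 = ![0, 1, 1] := by decide
    have q18 : pt 18 = ![0, 1, w] := by decide
    have cw : cj w = v := by decide
    have wv : w * v = 1 := by decide
    have W : ∀ p : Fin 21, word (HQ b) ⟨p.val, by omega⟩ = lam (HQ b (pt p)) := fun p => by
      rw [word, dif_pos p.2]
    have W0 := W 0
    have W16 := W 16
    have W20 := W 20
    have W4 := W 4
    have W8 := W 8
    have W1 := W 1
    have W2 := W 2
    have W17 := W 17
    have W18 := W 18
    rw [q0, e] at W0
    rw [q16, e] at W16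
    rw [q20, e] at W20
    rw [q4, e] at W4
    rw [q8, e] at W8
    rw [q1, e] at W1
    rw [q2, e] at W2
    rw [q17, e] at W17
    rw [q18, e] at W18
    simp [lam_add, g0, g1, g2, cw, wv] at W0 W16 W20 W4 W8 W1 W2 W17 W18 k01 l01 k02 l02 k12 l12
    rw [← e] at W0 W16 W20 W4 W8 W1 W2 W17 W18
    have k : ∀ x y t : ZMod 2, t + (x + y + (t + x + y)) = 0 := by decide
    apply word_zero_of _ hg <;> rw [Pi.add_apply]
    · rw [h21]; rfl
    · rw [h22]; rfl
    · rw [h23]; rfl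
    · rw [W0]; exact z2 _
    · rw [W16]; exact z2 _
    · rw [W20]; exact z2 _
    · rw [W4, k01]; exact k _ _ _
    · rw [W8, l01]; exact k _ _ _
    · rw [W1, k02]; exact k _ _ _
    · rw [W2, l02]; exact k _ _ _
    · rw [W17, k12]; exact k _ _ _
    · rw [W18, l12]; exact k _ _ _
  funext j
  have := congrFun hz j
  have k : ∀ x y : ZMod 2, x + y = 0 → x = y := by decide
  exact k _ _ this

/-- indicator of a binary digit -/
def ind (x : ZMod 2) : ℤ := if x = 1 then 1 else 0

theorem ind_nonneg : ∀ x, 0 ≤ ind x := by decide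

/-- low weight words with zero tail vanish -/
theorem low_weight (c : Fin 24 → ZMod 2) (hc : c ∈ GolayCode) (h21 : c 21 = 0) (h22 : c 22 = 0)
    (h23 : c 23 = 0) (hw : ∑ p : Fin 21, ind (c ⟨p.val, by omega⟩) < 8) : c = 0 := by
  obtain ⟨b, hb, hcb⟩ := exists_b c hc h21 h22 h23
  have hL := LU_lag ⊤ b hb
  have ha : aL (LU ⊤ b) = 0 := by
    have := hL.a_add
    rw [Ul_LU, finrank_top, finrank_V3] at this
    omega
  obtain ⟨k, hk, hk'⟩ := sum_TL hL
  have h3 := (TL_23_val (LU ⊤ b)).1 ha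
  obtain ⟨d1, d2⟩ := TL_diff (LU ⊤ b)
  rw [sum24] at hk
  have hp : ∀ p : Fin 21, TL (LU ⊤ b) ⟨p.val, by omega⟩ = 1 - 2 * ind (c ⟨p.val, by omega⟩) := by
    intro p
    rw [TL_pt, ha, eta_LU ⊤ b hb Submodule.mem_top, hcb, word, dif_pos p.2]
    have : ∀ x, (-2) ^ 0 * chi x = 1 - 2 * ind (lam x) := by decide
    exact this _
  simp only [hp] at hk
  rw [Finset.sum_sub_distrib, ← Finset.mul_sum] at hk
  simp only [Finset.sum_const, Finset.card_univ, Fintype.card_fin, nsmul_eq_mul] at hk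
  have hd : Module.finrank F4 (LU ⊤ b ⊓ Lbase : Submodule F4 VV) ≤ 3 :=
    (Submodule.finrank_mono inf_le_left).trans hL.rk.le
  have h0 : ∑ p : Fin 21, ind (c ⟨p.val, by omega⟩) = 0 := by
    generalize Module.finrank F4 (LU ⊤ b ⊓ Lbase : Submodule F4 VV) = d at hk' hd
    generalize ∑ p : Fin 21, ind (c ⟨p.val, by omega⟩) = S at *
    norm_num at hk
    interval_cases d <;> norm_num at hk' <;> omega
  rw [Finset.sum_eq_zero_iff_of_nonneg (fun p _ => ind_nonneg _)] at h0
  funext j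
  revert j
  apply fin24_cases
  · intro p
    have h := h0 p (Finset.mem_univ _)
    have : ∀ x, ind x = 0 → x = 0 := by decide
    exact this _ h
  · exact h21
  · exact h22
  · exact h23

theorem lineWord_pt (q p : Fin 21) : lineWord (pt q) ⟨p.val, by omega⟩
    = if sd (pt q) (pt p) = 0 then 1 else 0 := by
  rw [lineWord, dif_pos p.2]

theorem pt_ne : ∀ q, pt q ≠ 0 := by decide

theorem line_card : ∀ q : Fin 21,
    ∑ p : Fin 21, (if sd (pt q) (pt p) = 0 then (1 : ℤ) else 0) = 5 := by decide +kernel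

theorem line_join : ∀ p p' : Fin 21, ∃ q, sd (pt q) (pt p) = 0 ∧ sd (pt q) (pt p') = 0 := by
  decide +kernel

theorem line_sep : ∀ q x : Fin 21, sd (pt q) (pt x) = 0 → ∃ m : Fin 21, ∀ y : Fin 21,
    sd (pt q) (pt y) = 0 → (sd (pt m) (pt y) = 0 ↔ y = x) := by
  decide +kernel

theorem pt_span : ∀ (p q : Fin 21) (c : F4), c • pt p = pt q → q = p := by decide +kernel

/-- words with full tail and at most five other digits are lines -/
theorem is_line (c : Fin 24 → ZMod 2) (hc : c ∈ GolayCode) (h21 : c 21 = 1) (h22 : c 22 = 1)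
    (h23 : c 23 = 1) (hw : ∑ p : Fin 21, ind (c ⟨p.val, by omega⟩) ≤ 5) :
    ∃ q, c = lineWord (pt q) := by
  have main : ∀ q : Fin 21, (∑ p : Fin 21, ind (c ⟨p.val, by omega⟩)
      ≤ 2 * ∑ p : Fin 21, ind (c ⟨p.val, by omega⟩) * ind (lineWord (pt q) ⟨p.val, by omega⟩) + 2) →
      c = lineWord (pt q) := by
    intro q hq
    have hl := (golay_iff _).2 (golay_lineWord _ (pt_ne q))
    have hz : c + lineWord (pt q) = 0 := by
      apply low_weight _ (add_mem hc hl)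
      · rw [Pi.add_apply, h21, lineWord, dif_neg (by decide)]; rfl
      · rw [Pi.add_apply, h22, lineWord, dif_neg (by decide)]; rfl
      · rw [Pi.add_apply, h23, lineWord, dif_neg (by decide)]; rfl
      · have : ∀ x y : ZMod 2, ind (x + y) = ind x + ind y - 2 * (ind x * ind y) := by decide
        simp only [Pi.add_apply, this]
        rw [Finset.sum_sub_distrib, Finset.sum_add_distrib, ← Finset.mul_sum]
        have h5 : ∑ p : Fin 21, ind (lineWord (pt q) ⟨p.val, by omega⟩) = 5 := by
          rw [← line_card q]
          refine Finset.sum_congr rfl fun p _ => ?_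
          rw [lineWord_pt]
          split_ifs <;> rfl
        rw [h5]
        linarith
    funext j
    have := congrFun hz j
    have k : ∀ x y : ZMod 2, x + y = 0 → x = y := by decide
    exact k _ _ this
  by_cases h : ∃ p p' : Fin 21, p ≠ p' ∧ c ⟨p.val, by omega⟩ = 1 ∧ c ⟨p'.val, by omega⟩ = 1
  · obtain ⟨p, p', hne, h1, h2⟩ := h
    obtain ⟨q, l1, l2⟩ := line_join p p'
    refine ⟨q, main q ?_⟩
    have : ∑ x ∈ ({p, p'} : Finset (Fin 21)),
        ind (c ⟨x.val, by omega⟩) * ind (lineWord (pt q) ⟨x.val, by omega⟩)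
        ≤ ∑ x : Fin 21, ind (c ⟨x.val, by omega⟩) * ind (lineWord (pt q) ⟨x.val, by omega⟩) :=
      Finset.sum_le_sum_of_subset_of_nonneg (Finset.subset_univ _)
        (fun x _ _ => mul_nonneg (ind_nonneg _) (ind_nonneg _))
    rw [Finset.sum_pair hne, h1, h2, lineWord_pt, lineWord_pt, if_pos l1, if_pos l2] at this
    have e : ind 1 = 1 := rfl
    rw [e] at this
    linarith
  · refine ⟨0, main 0 ?_⟩
    have h0 : 0 ≤ ∑ p : Fin 21, ind (c ⟨p.val, by omega⟩) * ind (lineWord (pt 0) ⟨p.val, by omega⟩) :=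
      Finset.sum_nonneg (fun x _ => mul_nonneg (ind_nonneg _) (ind_nonneg _))
    have h1 : ∑ p : Fin 21, ind (c ⟨p.val, by omega⟩) ≤ 1 := by
      by_cases hx : ∃ p : Fin 21, c ⟨p.val, by omega⟩ = 1
      · obtain ⟨p, hp⟩ := hx
        rw [Finset.sum_eq_single p]
        · rw [hp]; decide
        · intro p' _ hne
          rw [ind, if_neg]
          intro h'
          exact h ⟨p', p, hne, h', hp⟩
        · intro h; exact absurd (Finset.mem_univ _) h
      · push Not at hx
        rw [Finset.sum_eq_zero]
        · norm_num
        · intro p _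
          rw [ind, if_neg (hx p)]
    linarith

theorem HQ_norm (m u : V3) : HQ (fun i j => cj (m i) * m j) u = sd u m * sd m u := by
  simp only [HQ, sd, Fin.sum_univ_three]
  ring

/-- prescribing values on a line -/
theorem exists_b_line (q : Fin 21) (s : Fin 21 → F4) (hs : ∀ x, cj (s x) = s x)
    (hs0 : ∀ x, sd (pt q) (pt x) ≠ 0 → s x = 0) (hsum : ∑ x, s x = 0) :
    ∃ b : Fin 3 → Fin 3 → F4, (∀ i j, b j i = cj (b i j)) ∧
      ∀ y, sd (pt q) (pt y) = 0 → HQ b (pt y) = s y := by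
  have hm : ∀ x : Fin 21, ∃ m : Fin 21, sd (pt q) (pt x) = 0 → ∀ y : Fin 21,
    sd (pt q) (pt y) = 0 → (sd (pt m) (pt y) = 0 ↔ y = x) := by
    intro x
    by_cases h : sd (pt q) (pt x) = 0
    · obtain ⟨m, hm⟩ := line_sep q x h
      exact ⟨m, fun _ => hm⟩
    · exact ⟨0, fun h' => absurd h' h⟩
  choose m hm using hm
  refine ⟨fun i j => ∑ x, s x * (cj (pt (m x) i) * pt (m x) j), ?_, ?_⟩
  · intro i j
    simp only [map_sum, map_mul, cj_cj, hs]
    refine Finset.sum_congr rfl fun x _ => by ring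
  · intro y hy
    have e : HQ (fun i j => ∑ x, s x * (cj (pt (m x) i) * pt (m x) j)) (pt y)
        = ∑ x, s x * HQ (fun i j => cj (pt (m x) i) * pt (m x) j) (pt y) := by
      simp only [HQ, Fin.sum_univ_three, Finset.mul_sum, mul_add, Finset.sum_add_distrib]
      simp only [mul_left_comm, mul_assoc]
    rw [e]
    have t : ∀ x, s x * HQ (fun i j => cj (pt (m x) i) * pt (m x) j) (pt y)
        = s x + if x = y then s x else 0 := by
      intro x
      by_cases hx : sd (pt q) (pt x) = 0
      · have hmx := hm x hx y hy
        rw [HQ_norm]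
        split_ifs with hxy
        · rw [hmx.2 hxy.symm, mul_zero, mul_zero, F4.add_self]
        · have hne : sd (pt (m x)) (pt y) ≠ 0 := fun h => hxy (hmx.1 h).symm
          rw [← cj_sd]
          have : ∀ a : F4, a ≠ 0 → cj a * a = 1 := by decide
          rw [this _ hne, mul_one, add_zero]
      · rw [hs0 x hx]; simp
    simp only [t]
    rw [Finset.sum_add_distrib, hsum, zero_add]
    simp

open F4

theorem TAB_odd (T : Fin 24 → ℤ) (h1 : T 21 - T 23 = 4) (h2 : T 22 - T 23 = 4) (h23 : T 23 = -3)
    (hp : ∀ p : Fin 21, T ⟨p.val, by omega⟩ = 1 ∨ T ⟨p.val, by omega⟩ = -1)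
    (hg : (fun i => if (4:ℤ) ∣ (T i - 1 - 2) then (1 : ZMod 2) else 0) ∈ GolayCode) :
    ∃ L, IsLag L ∧ TL L = T := by
  have h21 : T 21 = 1 := by linarith
  have h22 : T 22 = 1 := by linarith
  obtain ⟨b, hb, hcb⟩ := exists_b _ hg (by simp only [h21]; rfl) (by simp only [h22]; rfl)
    (by simp only [h23]; rfl)
  refine TL_of ⊤ b hb T h1 h2 0 (by rw [finrank_top, finrank_V3]) (by rw [h23]; norm_num)
    (fun p _ => ?_) (fun p h => absurd Submodule.mem_top h)
  have h := congrFun hcb ⟨p.val, by omega⟩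
  simp only [word] at h
  rw [dif_pos p.2] at h
  have k1 : ∀ x, (1 : ZMod 2) = lam x → (-1 : ℤ) = (-2) ^ 0 * chi x := by decide
  have k0 : ∀ x, (0 : ZMod 2) = lam x → (1 : ℤ) = (-2) ^ 0 * chi x := by decide
  rcases hp p with e | e
  · rw [e, if_neg (by decide)] at h
    rw [e]
    exact k0 _ h
  · rw [e, if_pos (by decide)] at h
    rw [e]
    exact k1 _ h

theorem TAB_zero (T : Fin 24 → ℤ) (h1 : T 21 - T 23 = 4) (h2 : T 22 - T 23 = 4) (h23 : T 23 = 0)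
    (hp : ∀ p : Fin 21, T ⟨p.val, by omega⟩ = 0) :
    ∃ L, IsLag L ∧ TL L = T := by
  refine TL_of ⊥ (fun _ _ => 0) (by intro i j; rfl) T h1 h2 3 (by rw [finrank_bot])
    (by rw [h23]; norm_num) (fun p h => absurd ((Submodule.mem_bot _).1 h) (pt_ne p)) (fun p _ => hp p)

/-- a nonzero coordinate of a point -/
def piv (p : Fin 21) : Fin 3 := if p.val < 16 then 0 else if p.val < 20 then 1 else 2

theorem piv_eq : ∀ p, pt p (piv p) = 1 := by decide

theorem TAB_point (T : Fin 24 → ℤ) (h1 : T 21 - T 23 = 4) (h2 : T 22 - T 23 = 4) (h23 : T 23 = -4)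
    (p : Fin 21) (hp : T ⟨p.val, by omega⟩ = 4 ∨ T ⟨p.val, by omega⟩ = -4)
    (hp0 : ∀ q : Fin 21, q ≠ p → T ⟨q.val, by omega⟩ = 0) :
    ∃ L, IsLag L ∧ TL L = T := by
  have hm : ∃ m : F4, cj m = m ∧ T ⟨p.val, by omega⟩ = (-2) ^ 2 * chi m := by
    rcases hp with e | e <;> rw [e]
    · exact ⟨0, by decide⟩
    · exact ⟨1, by decide⟩
  obtain ⟨m, hm, hT⟩ := hm
  refine TL_of (Submodule.span F4 {pt p}) (fun i' j' => if i' = piv p ∧ j' = piv p then m else 0)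
    ?_ T h1 h2 2 (by rw [finrank_span_singleton (pt_ne p)])
    (by rw [h23]; norm_num) (fun q hq => ?_) (fun q hq => ?_)
  · intro i j
    by_cases h : i = piv p ∧ j = piv p
    · rw [if_pos h, if_pos h.symm, hm]
    · rw [if_neg h, if_neg (fun h' => h h'.symm), map_zero]
  · obtain ⟨c, hc⟩ := Submodule.mem_span_singleton.1 hq
    obtain rfl := pt_span p q c hc
    rw [HQ_diag, piv_eq, hT]
    simp
  · apply hp0
    rintro rfl
    exact hq (Submodule.mem_span_singleton_self _)

theorem TAB_line (T : Fin 24 → ℤ) (h1 : T 21 - T 23 = 4) (h2 : T 22 - T 23 = 4) (h23 : T 23 = -2)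
    (q : Fin 21)
    (hp : ∀ p : Fin 21, sd (pt q) (pt p) = 0 → T ⟨p.val, by omega⟩ = 2 ∨ T ⟨p.val, by omega⟩ = -2)
    (hp0 : ∀ p : Fin 21, sd (pt q) (pt p) ≠ 0 → T ⟨p.val, by omega⟩ = 0)
    (h8 : (8 : ℤ) ∣ ∑ i, T i) :
    ∃ L, IsLag L ∧ TL L = T := by
  let s : Fin 21 → F4 := fun p => if T ⟨p.val, by omega⟩ = 2 then 1 else 0
  have hsum : ∑ x, s x = 0 := by
    let k : Fin 21 → ℤ := fun p => if T ⟨p.val, by omega⟩ = 2 then 1 else 0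
    have hk : ∀ p : Fin 21, T ⟨p.val, by omega⟩
        = 4 * k p - 2 * (if sd (pt q) (pt p) = 0 then (1 : ℤ) else 0) := by
      intro p
      simp only [k]
      by_cases h : sd (pt q) (pt p) = 0
      · rcases hp p h with e | e <;> rw [e, if_pos h] <;> norm_num
      · rw [hp0 p h, if_neg h]; norm_num
    rw [sum24] at h8
    simp only [hk] at h8
    rw [Finset.sum_sub_distrib, ← Finset.mul_sum, ← Finset.mul_sum, line_card q] at h8
    have he : (2 : ℤ) ∣ ∑ p, k p := by omega
    have hc : ∑ x, s x = ((∑ p, k p : ℤ) : F4) := by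
      rw [Int.cast_sum]
      refine Finset.sum_congr rfl fun p _ => ?_
      simp only [s, k]
      split_ifs <;> simp
    obtain ⟨r, hr⟩ := he
    rw [hc, hr, Int.cast_mul]
    have : ((2 : ℤ) : F4) = 0 := by
      have : ((2 : ℤ) : F4) = 1 + 1 := by norm_num
      rw [this]; rfl
    rw [this, zero_mul]
  obtain ⟨b, hb, hbs⟩ := exists_b_line q s
    (fun x => by simp only [s]; split_ifs <;> simp)
    (fun x hx => by simp only [s]; rw [hp0 x hx]; rfl) hsum
  have hfr : Module.finrank F4 (sd_sesq.perp (Submodule.span F4 {pt q})) + 1 = 3 := by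
    have := sd_sesq.finrank_perp sd_surj (Submodule.span F4 {pt q})
    rw [finrank_span_singleton (pt_ne q), finrank_V3] at this
    omega
  have hmem : ∀ u, u ∈ sd_sesq.perp (Submodule.span F4 {pt q}) ↔ sd (pt q) u = 0 := by
    intro u
    rw [Sesq.mem_perp]
    constructor
    · intro h; exact h _ (Submodule.mem_span_singleton_self _)
    · intro h x hx
      obtain ⟨c, rfl⟩ := Submodule.mem_span_singleton.1 hx
      rw [sd_sesq.smul_left, h, mul_zero]
  refine TL_of _ b hb T h1 h2 1 hfr (by rw [h23]; norm_num) (fun p h => ?_) (fun p h => ?_)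
  · rw [hmem] at h
    rw [hbs p h]
    simp only [s]
    rcases hp p h with e | e <;> rw [e] <;> rfl
  · rw [hmem] at h
    exact hp0 p h

theorem TAB_surj (T : Fin 24 → ℤ) (hT : T ∈ TAB) : ∃ L, IsLag L ∧ TL L = T := by
  obtain ⟨⟨m, hm, hpar, hg, h8⟩, hn, h1, h2⟩ := (mem_TAB_iff T).1 hT
  rw [sum24] at hn
  have h21 : T 21 = T 23 + 4 := by linarith
  have h22 : T 22 = T 23 + 4 := by linarith
  rw [h21, h22] at hn
  have hnn : ∀ p : Fin 21, 0 ≤ T ⟨p.val, by omega⟩ * T ⟨p.val, by omega⟩ := fun p => mul_self_nonneg _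
  have h0 : 0 ≤ ∑ p : Fin 21, T ⟨p.val, by omega⟩ * T ⟨p.val, by omega⟩ :=
    Finset.sum_nonneg fun p _ => hnn p
  have lo : -5 ≤ T 23 := by nlinarith
  have hi : T 23 ≤ 0 := by nlinarith
  have p23 := hpar 23
  rcases hm with rfl | rfl
  · rw [mul_zero, sub_zero] at h8
    simp only [sub_zero] at hg hpar p23
    have hc : T 23 = 0 ∨ T 23 = -2 ∨ T 23 = -4 := by omega
    have hle : ∀ p : Fin 21, 4 * ind (if (4:ℤ) ∣ (T ⟨p.val, by omega⟩ - 2) then (1 : ZMod 2) else 0)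
        ≤ T ⟨p.val, by omega⟩ * T ⟨p.val, by omega⟩ := by
      intro p
      split_ifs with h
      · have e : ind 1 = 1 := rfl
        rw [e]
        obtain ⟨k, hk⟩ := h
        have : T ⟨p.val, by omega⟩ = 4 * k + 2 := by linarith
        rw [this]
        have : 0 ≤ k * (k + 1) := by
          rcases le_or_gt 0 k with h | h
          · positivity
          · nlinarith
        nlinarith
      · have e : ind 0 = 0 := rfl
        rw [e]
        exact hnn p
    have hsle : 4 * ∑ p : Fin 21, ind (if (4:ℤ) ∣ (T ⟨p.val, by omega⟩ - 2) then (1 : ZMod 2) else 0)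
        ≤ ∑ p : Fin 21, T ⟨p.val, by omega⟩ * T ⟨p.val, by omega⟩ := by
      rw [Finset.mul_sum]
      exact Finset.sum_le_sum fun p _ => hle p
    rcases hc with h23 | h23 | h23
    · rw [h23] at hn
      have hz : ∑ p : Fin 21, T ⟨p.val, by omega⟩ * T ⟨p.val, by omega⟩ = 0 := by linarith
      rw [Finset.sum_eq_zero_iff_of_nonneg fun p _ => hnn p] at hz
      exact TAB_zero T h1 h2 h23 fun p => mul_self_eq_zero.1 (hz p (Finset.mem_univ _))
    · rw [h23] at hn h21 h22
      have hz : ∑ p : Fin 21, T ⟨p.val, by omega⟩ * T ⟨p.val, by omega⟩ = 20 := by linarith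
      obtain ⟨q, hq⟩ := is_line _ hg (by simp only [h21]; rfl) (by simp only [h22]; rfl)
        (by simp only [h23]; rfl) (by linarith)
      have hqp : ∀ p : Fin 21, (if (4:ℤ) ∣ (T ⟨p.val, by omega⟩ - 2) then (1 : ZMod 2) else 0)
          = if sd (pt q) (pt p) = 0 then 1 else 0 := by
        intro p
        rw [← lineWord_pt, ← hq]
      have heq : ∀ p ∈ (Finset.univ : Finset (Fin 21)), 4 * ind (if (4:ℤ) ∣ (T (⟨p.val, by omega⟩ : Fin 24) - 2) then (1 : ZMod 2) else 0)
        = T ⟨p.val, by omega⟩ * T ⟨p.val, by omega⟩ := by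
        rw [← Finset.sum_eq_sum_iff_of_le fun (p : Fin 21) _ => hle p, hz, ← Finset.mul_sum]
        have : ∑ p : Fin 21, ind (if (4:ℤ) ∣ (T ⟨p.val, by omega⟩ - 2) then (1 : ZMod 2) else 0) = 5 := by
          rw [← line_card q]
          refine Finset.sum_congr rfl fun p _ => ?_
          rw [hqp]
          split_ifs <;> rfl
        rw [this]; norm_num
      refine TAB_line T h1 h2 h23 q (fun p hp => ?_) (fun p hp => ?_) h8
      · have := heq p (Finset.mem_univ _)
        rw [hqp, if_pos hp] at this
        have e : ind 1 = 1 := rfl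
        rw [e] at this
        have : (T ⟨p.val, by omega⟩ - 2) * (T ⟨p.val, by omega⟩ + 2) = 0 := by linarith
        rcases mul_eq_zero.1 this with h | h
        · left; linarith
        · right; linarith
      · have := heq p (Finset.mem_univ _)
        rw [hqp, if_neg hp] at this
        have e : ind 0 = 0 := rfl
        rw [e] at this
        exact mul_self_eq_zero.1 (by linarith)
    · rw [h23] at hn h21 h22
      have hz : ∑ p : Fin 21, T ⟨p.val, by omega⟩ * T ⟨p.val, by omega⟩ = 16 := by linarith
      have hc0 := low_weight _ hg (by simp only [h21]; rfl) (by simp only [h22]; rfl)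
        (by simp only [h23]; rfl) (by linarith)
      have h4 : ∀ p : Fin 21, (4 : ℤ) ∣ T ⟨p.val, by omega⟩ := by
        intro p
        have a := congrFun hc0 ⟨p.val, by omega⟩
        have b := hpar ⟨p.val, by omega⟩
        simp only [Pi.zero_apply] at a
        by_contra h
        rw [if_pos (by omega)] at a
        exact absurd a (by decide)
      have hex : ∃ p : Fin 21, T ⟨p.val, by omega⟩ ≠ 0 := by
        by_contra h
        push Not at h
        simp [h] at hz
      obtain ⟨p, hp⟩ := hex
      have h16 : ∀ x : ℤ, 4 ∣ x → x ≠ 0 → 16 ≤ x * x := by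
        rintro x ⟨k, rfl⟩ hx
        have : k ≠ 0 := by rintro rfl; simp at hx
        have : 0 < k * k := mul_self_pos.2 this
        nlinarith
      rw [← Finset.add_sum_erase _ _ (Finset.mem_univ p)] at hz
      have h5 := h16 _ (h4 p) hp
      have h6 : 0 ≤ ∑ x ∈ Finset.univ.erase p, T (⟨x.val, by omega⟩ : Fin 24) * T ⟨x.val, by omega⟩ :=
        Finset.sum_nonneg fun p _ => hnn p
      have h7 : ∑ x ∈ Finset.univ.erase p, T (⟨x.val, by omega⟩ : Fin 24) * T ⟨x.val, by omega⟩ = 0 := by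
        linarith
      rw [Finset.sum_eq_zero_iff_of_nonneg fun p _ => hnn p] at h7
      refine TAB_point T h1 h2 h23 p ?_ fun q hq =>
        mul_self_eq_zero.1 (h7 q (Finset.mem_erase.2 ⟨hq, Finset.mem_univ _⟩))
      have : (T ⟨p.val, by omega⟩ - 4) * (T ⟨p.val, by omega⟩ + 4) = 0 := by linarith
      rcases mul_eq_zero.1 this with h | h
      · left; linarith
      · right; linarith
  · have hge : ∀ p : Fin 21, 1 ≤ T ⟨p.val, by omega⟩ * T ⟨p.val, by omega⟩ := by
      intro p
      have := hpar ⟨p.val, by omega⟩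
      have : T ⟨p.val, by omega⟩ ≠ 0 := by intro h; rw [h] at this; omega
      have : 0 < T ⟨p.val, by omega⟩ * T ⟨p.val, by omega⟩ := mul_self_pos.2 this
      linarith
    have hs : ∑ p : Fin 21, (1 : ℤ) ≤ ∑ p : Fin 21, T ⟨p.val, by omega⟩ * T ⟨p.val, by omega⟩ :=
      Finset.sum_le_sum fun p _ => hge p
    have h21' : ∑ p : Fin 21, (1 : ℤ) = 21 := by simp
    have h23 : T 23 = -3 := by
      have hc : T 23 = -1 ∨ T 23 = -3 ∨ T 23 = -5 := by omega
      rcases hc with h | h | h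
      · rw [h] at hn; linarith
      · exact h
      · rw [h] at hn; linarith
    rw [h23] at hn
    have heq : ∀ p ∈ (Finset.univ : Finset (Fin 21)), (1 : ℤ) = T (⟨p.val, by omega⟩ : Fin 24) * T ⟨p.val, by omega⟩ := by
      rw [← Finset.sum_eq_sum_iff_of_le fun (p : Fin 21) _ => hge p, h21']
      linarith
    refine TAB_odd T h1 h2 h23 (fun p => ?_) hg
    have := heq p (Finset.mem_univ _)
    have : (T ⟨p.val, by omega⟩ - 1) * (T ⟨p.val, by omega⟩ + 1) = 0 := by linarith
    rcases mul_eq_zero.1 this with h | h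
    · left; linarith
    · right; linarith

open F4

section descent
variable {K : Type*} [Field K]

/-- the embedding of `F4` given by a primitive cube root of unity -/
def embFun (t : K) : F4 → K
  | z => 0 | o => 1 | w => t | v => t + 1

theorem exists_emb (K : Type*) [Field K] [IsAlgClosed K] [CharP K 2] :
    ∃ e : F4 →+* K, ∀ x : K, x ^ 4 = x → ∃ a, e a = x := by
  have hd : (Polynomial.X ^ 2 + Polynomial.X + 1 : Polynomial K).degree ≠ 0 := by
    have : (Polynomial.X ^ 2 + Polynomial.X + 1 : Polynomial K).degree = 2 := by compute_degree!
    rw [this]; decide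
  obtain ⟨t, ht⟩ := IsAlgClosed.exists_root _ hd
  have ht : t ^ 2 + t + 1 = 0 := by simpa [Polynomial.IsRoot] using ht
  have h2 : (2 : K) = 0 := CharTwo.two_eq_zero
  let e : F4 →+* K :=
    { toFun := embFun t
      map_one' := rfl
      map_zero' := rfl
      map_mul' := by
        intro x y
        cases x <;> cases y
        · exact (zero_mul _).symm
        · exact (zero_mul _).symm
        · exact (zero_mul _).symm
        · exact (zero_mul _).symm
        · exact (mul_zero _).symm
        · exact (one_mul _).symm
        · exact (one_mul _).symm
        · exact (one_mul _).symm
        · exact (mul_zero _).symm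
        · exact (mul_one _).symm
        · change t + 1 = t * t
          linear_combination (t + 1) * h2 - ht
        · change 1 = t * (t + 1)
          linear_combination h2 - ht
        · exact (mul_zero _).symm
        · exact (mul_one _).symm
        · change 1 = (t + 1) * t
          linear_combination h2 - ht
        · change t = (t + 1) * (t + 1)
          linear_combination - ht
      map_add' := by
        intro x y
        cases x <;> cases y
        · exact (zero_add _).symm
        · exact (zero_add _).symm
        · exact (zero_add _).symm
        · exact (zero_add _).symm
        · exact (add_zero _).symm
        · change 0 = 1 + (1 : K)
          linear_combination -h2
        · change t + 1 = 1 + t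
          ring
        · change t = 1 + (t + 1)
          linear_combination -h2
        · exact (add_zero _).symm
        · rfl
        · change 0 = t + t
          linear_combination -t * h2
        · change 1 = t + (t + 1)
          linear_combination -t * h2
        · exact (add_zero _).symm
        · change t = (t + 1) + 1
          linear_combination -h2
        · change 1 = (t + 1) + t
          linear_combination -t * h2
        · change 0 = (t + 1) + (t + 1)
          linear_combination -(t + 1) * h2 }
  refine ⟨e, fun x hx => ?_⟩
  have hf : x * (x - 1) * (x - t) * (x - (t + 1)) = 0 := by
    linear_combination hx + (x ^ 2 - x) * ht - x ^ 3 * (t + 1) * h2 + x ^ 2 * (t + 1) * h2 - x * (x - 1) * h2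
  rcases mul_eq_zero.1 hf with hf | hf
  · rcases mul_eq_zero.1 hf with hf | hf
    · rcases mul_eq_zero.1 hf with hf | hf
      · exact ⟨z, hf.symm⟩
      · exact ⟨o, (sub_eq_zero.1 hf).symm⟩
    · exact ⟨w, (sub_eq_zero.1 hf).symm⟩
  · exact ⟨v, (sub_eq_zero.1 hf).symm⟩

/-- the `F4`-points of a subspace -/
def QF (e : F4 →+* K) {n : ℕ} (Q : Submodule K (Fin n → K)) : Submodule F4 (Fin n → F4) where
  carrier := {x | (fun i => e (x i)) ∈ Q}
  zero_mem' := by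
    have : (fun i : Fin n => e ((0 : Fin n → F4) i)) = 0 := by ext i; simp
    change (fun i : Fin n => e ((0 : Fin n → F4) i)) ∈ Q
    rw [this]
    exact Q.zero_mem
  add_mem' := by
    intro a b ha hb
    have : (fun i : Fin n => e ((a + b) i)) = (fun i => e (a i)) + fun i => e (b i) := by
      ext i; simp
    change (fun i : Fin n => e ((a + b) i)) ∈ Q
    rw [this]
    exact Q.add_mem ha hb
  smul_mem' := by
    intro c a ha
    have : (fun i : Fin n => e ((c • a) i)) = e c • (fun i => e (a i)) := by
      ext i; simp
    change (fun i : Fin n => e ((c • a) i)) ∈ Q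
    rw [this]
    exact Q.smul_mem _ ha

theorem mem_QF {e : F4 →+* K} {n : ℕ} {Q : Submodule K (Fin n → K)} {x : Fin n → F4} :
    x ∈ QF e Q ↔ (fun i => e (x i)) ∈ Q := Iff.rfl

theorem exists_rational [CharP K 2] (e : F4 →+* K) (he : ∀ x : K, x ^ 4 = x → ∃ a, e a = x) {n : ℕ}
    (Q : Submodule K (Fin n → K)) (hQ : ∀ x ∈ Q, (fun i => x i ^ 4) ∈ Q) (hne : Q ≠ ⊥) :
    ∃ (i : Fin n) (y : Fin n → F4), y i = 1 ∧ y ∈ QF e Q := by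
  classical
  have hex : ∃ d, ∃ x ∈ Q, x ≠ 0 ∧ (Finset.univ.filter fun i => x i ≠ 0).card = d := by
    obtain ⟨x, hx, hx0⟩ := Submodule.exists_mem_ne_zero_of_ne_bot hne
    exact ⟨_, x, hx, hx0, rfl⟩
  obtain ⟨x, hx, hx0, hcard⟩ := Nat.find_spec hex
  obtain ⟨i, hi⟩ := Function.ne_iff.1 hx0
  have hi : x i ≠ 0 := hi
  have hy : (x i)⁻¹ • x ∈ Q := Q.smul_mem _ hx
  set y := (x i)⁻¹ • x with hydef
  have hyi : y i = 1 := by simp [hydef, hi]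
  have hz : (fun j => y j ^ 4) - y ∈ Q := Q.sub_mem (hQ _ hy) hy
  have hz0 : (fun j => y j ^ 4) - y = 0 := by
    by_contra hzne
    have h1 := Nat.find_min' hex ⟨_, hz, hzne, rfl⟩
    have h2 : (Finset.univ.filter fun j => ((fun j => y j ^ 4) - y) j ≠ 0) ⊂
        (Finset.univ.filter fun j => x j ≠ 0) := by
      rw [Finset.ssubset_iff_of_subset]
      · refine ⟨i, by simp [hi], by simp [hyi]⟩
      · intro j
        simp only [Finset.mem_filter, Finset.mem_univ, true_and]
        intro h h'
        apply h
        simp [hydef, h']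
    have h3 := Finset.card_lt_card h2
    omega
  have hya : ∀ j, ∃ a, e a = y j := by
    intro j
    apply he
    have := congrFun hz0 j
    exact sub_eq_zero.1 this
  choose a ha using hya
  refine ⟨i, a, ?_, ?_⟩
  · apply e.injective
    rw [ha, hyi, map_one]
  · rw [mem_QF]
    simp only [ha]
    exact hy

theorem map_proj_one {F : Type*} [Field F] {n : ℕ} (Q : Submodule F (Fin n → F)) (i : Fin n)
    (y : Fin n → F) (hy : y ∈ Q) (hyi : y i = 1) :
    Module.finrank F (Q ⊓ LinearMap.ker (LinearMap.proj i : (Fin n → F) →ₗ[F] F) :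
      Submodule F (Fin n → F)) + 1 = Module.finrank F Q := by
  have h := finrank_map_add (LinearMap.proj i : (Fin n → F) →ₗ[F] F) Q
  have ht : Q.map (LinearMap.proj i : (Fin n → F) →ₗ[F] F) = ⊤ := by
    rw [eq_top_iff]
    intro c _
    exact ⟨c • y, Q.smul_mem c hy, by simp [hyi]⟩
  rw [ht, finrank_top, Module.finrank_self] at h
  omega

theorem descent [CharP K 2] (e : F4 →+* K) (he : ∀ x : K, x ^ 4 = x → ∃ a, e a = x) {n : ℕ} (d : ℕ) :
    ∀ Q : Submodule K (Fin n → K), Module.finrank K Q = d → (∀ x ∈ Q, (fun i => x i ^ 4) ∈ Q) →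
      Module.finrank F4 (QF e Q) = d := by
  induction d with
  | zero =>
    intro Q hQ _
    have hb : Q = ⊥ := Submodule.finrank_eq_zero.1 hQ
    have : QF e Q = ⊥ := by
      rw [eq_bot_iff]
      intro x hx
      rw [mem_QF, hb, Submodule.mem_bot] at hx
      rw [Submodule.mem_bot]
      ext i
      exact (map_eq_zero e).1 (congrFun hx i)
    rw [this, finrank_bot]
  | succ d ih =>
    intro Q hQ hs
    have hne : Q ≠ ⊥ := by
      rintro rfl
      rw [finrank_bot] at hQ
      omega
    obtain ⟨i, y, hyi, hy⟩ := exists_rational e he Q hs hne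
    have h1 := map_proj_one Q i _ (mem_QF.1 hy) (by simp [hyi])
    have h2 := map_proj_one (QF e Q) i y hy hyi
    have h3 := ih (Q ⊓ LinearMap.ker (LinearMap.proj i : (Fin n → K) →ₗ[K] K)) (by omega) (by
      rintro x ⟨hx, hx'⟩
      refine ⟨hs x hx, ?_⟩
      have : x i = 0 := hx'
      simp [this])
    have h4 : QF e (Q ⊓ LinearMap.ker (LinearMap.proj i : (Fin n → K) →ₗ[K] K))
        = QF e Q ⊓ LinearMap.ker (LinearMap.proj i : (Fin n → F4) →ₗ[F4] F4) := by
      ext x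
      rw [mem_QF, Submodule.mem_inf, Submodule.mem_inf, mem_QF]
      simp
    rw [h4] at h3
    omega

end descent

section planes
variable {K : Type*} [Field K] [IsAlgClosed K] [CharP K 2]

theorem polar (e : F4 →+* K) {P : Submodule K (Fin 6 → K)} (hP : ∀ x ∈ P, ∑ i, x i ^ 3 = 0) :
    ∀ x ∈ P, ∀ y ∈ P, ∑ i, x i ^ 2 * y i = 0 := by
  intro x hx y hy
  have h2 : (2 : K) = 0 := CharTwo.two_eq_zero
  have ht : e w ^ 2 + e w + 1 = 0 := by
    rw [← map_pow, ← map_add, ← map_one e, ← map_add, ← map_zero e]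
    congr 1
  have key : ∀ t : K, t * ∑ i, x i ^ 2 * y i + t ^ 2 * ∑ i, x i * y i ^ 2 = 0 := by
    intro t
    have h := hP _ (P.add_mem hx (P.smul_mem t hy))
    have hx' := hP _ hx
    have hy' := hP _ hy
    have ex : ∑ i, (x + t • y) i ^ 3 = ∑ i, x i ^ 3 + 3 * (t * ∑ i, x i ^ 2 * y i)
        + 3 * (t ^ 2 * ∑ i, x i * y i ^ 2) + t ^ 3 * ∑ i, y i ^ 3 := by
      simp only [Finset.mul_sum, ← Finset.sum_add_distrib]
      refine Finset.sum_congr rfl fun i _ => ?_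
      simp only [Pi.add_apply, Pi.smul_apply, smul_eq_mul]
      ring
    rw [ex, hx', hy'] at h
    linear_combination h - (t * ∑ i, x i ^ 2 * y i + t ^ 2 * ∑ i, x i * y i ^ 2) * h2
  have k1 := key 1
  have k2 := key (e w)
  set A := ∑ i, x i ^ 2 * y i
  set B := ∑ i, x i * y i ^ 2
  linear_combination (e w) ^ 2 * k1 - k2 + A * (e w) * h2 - A * ht + A * h2

theorem sq_indep {ι : Type*} [Fintype ι] {n : ℕ} (b : ι → Fin n → K) (hb : LinearIndependent K b) :
    LinearIndependent K (fun k i => b k i ^ 2) := by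
  rw [Fintype.linearIndependent_iff] at hb ⊢
  intro g hg k
  have hr : ∀ k, ∃ d : K, d ^ 2 = g k := fun k => IsAlgClosed.exists_pow_nat_eq _ (by norm_num)
  choose d hd using hr
  have h0 : ∑ k, d k • b k = 0 := by
    ext i
    have := congrFun hg i
    simp only [Finset.sum_apply, Pi.smul_apply, smul_eq_mul, Pi.zero_apply, ← hd, ← mul_pow] at this ⊢
    rw [← CharTwo.sum_sq] at this
    exact pow_eq_zero_iff (by norm_num) |>.1 this
  rw [← hd, hb d h0 k]
  norm_num

theorem frob_stable {P : Submodule K (Fin 6 → K)} (hr : Module.finrank K P = 3)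
    (hP : ∀ x ∈ P, ∀ y ∈ P, ∑ i, x i ^ 2 * y i = 0) : ∀ x ∈ P, (fun i => x i ^ 4) ∈ P := by
  let bs := Module.finBasisOfFinrankEq K P hr
  let b : Fin 3 → Fin 6 → K := fun k => (bs k : Fin 6 → K)
  have hb : LinearIndependent K b := bs.linearIndependent.map' P.subtype (Submodule.ker_subtype P)
  let M : Matrix (Fin 3) (Fin 6) K := Matrix.of fun k i => b k i ^ 2
  have hrank : M.rank = 3 := by
    have := LinearIndependent.rank_matrix (M := M) (sq_indep b hb)
    simpa using this
  have hker : Module.finrank K (LinearMap.ker M.mulVecLin) = 3 := by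
    have := LinearMap.finrank_range_add_finrank_ker M.mulVecLin
    rw [Module.finrank_fin_fun] at this
    rw [Matrix.rank] at hrank
    omega
  have hmem : ∀ y : Fin 6 → K, y ∈ LinearMap.ker M.mulVecLin ↔ ∀ k, ∑ i, b k i ^ 2 * y i = 0 := by
    intro y
    rw [LinearMap.mem_ker, funext_iff]
    rfl
  have heq : P = LinearMap.ker M.mulVecLin := by
    apply Submodule.eq_of_le_of_finrank_eq
    · intro y hy
      rw [hmem]
      intro k
      exact hP _ (bs k).2 _ hy
    · rw [hr, hker]
  intro x hx
  rw [heq, hmem]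
  intro k
  have h := hP x hx _ (bs k).2
  have : ∑ i, b k i ^ 2 * x i ^ 4 = (∑ i, x i ^ 2 * b k i) ^ 2 := by
    rw [CharTwo.sum_sq]
    refine Finset.sum_congr rfl fun i _ => by ring
  rw [this, h]
  norm_num

/-- hyperbolic coordinates -/
def Psi : VV ≃ₗ[F4] (Fin 6 → F4) where
  toFun x := ![v * x.1 0 + x.2 0, w * x.1 0 + x.2 0, v * x.1 1 + x.2 1, w * x.1 1 + x.2 1,
    v * x.1 2 + x.2 2, w * x.1 2 + x.2 2]
  invFun y := (![y 0 + y 1, y 2 + y 3, y 4 + y 5],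
    ![w * y 0 + v * y 1, w * y 2 + v * y 3, w * y 4 + v * y 5])
  map_add' x y := by
    ext i
    fin_cases i <;> simp <;> ring
  map_smul' c x := by
    ext i
    fin_cases i <;> simp <;> ring
  left_inv := by
    rintro ⟨a, b⟩
    have h1 : ∀ a b : F4, v * a + b + (w * a + b) = a := by decide
    have h2 : ∀ a b : F4, w * (v * a + b) + v * (w * a + b) = b := by decide
    apply Prod.ext <;> ext i <;> fin_cases i <;> simp [h1, h2]
  right_inv := by
    intro y
    have h1 : ∀ a b : F4, v * (a + b) + (w * a + v * b) = a := by decide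
    have h2 : ∀ a b : F4, w * (a + b) + (w * a + v * b) = b := by decide
    ext i
    fin_cases i <;> simp [h1, h2]

theorem Psi_form (x y : VV) : ∑ i, Psi x i ^ 2 * Psi y i = hV y x := by
  have h : ∀ a b c d : F4, (v * a + b) ^ 2 * (v * c + d) + (w * a + b) ^ 2 * (w * c + d)
      = c * cj b + d * cj a := by decide
  simp only [Psi, LinearEquiv.coe_mk, LinearMap.coe_mk, AddHom.coe_mk, hV, sd, Fin.sum_univ_six,
    Fin.sum_univ_three, Matrix.cons_val]
  linear_combination h (x.1 0) (x.2 0) (y.1 0) (y.2 0) + h (x.1 1) (x.2 1) (y.1 1) (y.2 1)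
    + h (x.1 2) (x.2 2) (y.1 2) (y.2 2)

/-- the `F4`-Lagrangian of a plane -/
def LP (e : F4 →+* K) (P : Submodule K (Fin 6 → K)) : Submodule F4 VV :=
  (QF e P).comap Psi.toLinearMap

theorem mem_LP {e : F4 →+* K} {P : Submodule K (Fin 6 → K)} {x : VV} :
    x ∈ LP e P ↔ (fun i => e (Psi x i)) ∈ P := Iff.rfl

theorem LP_finrank (e : F4 →+* K) (he : ∀ x : K, x ^ 4 = x → ∃ a, e a = x)
    (P : Submodule K (Fin 6 → K)) (hs : ∀ x ∈ P, (fun i => x i ^ 4) ∈ P) :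
    Module.finrank F4 (LP e P) = Module.finrank K P := by
  rw [← descent e he _ P rfl hs]
  have h : (LP e P).map Psi.toLinearMap = QF e P :=
    Submodule.map_comap_eq_of_surjective Psi.surjective _
  rw [← h, finrank_map_inj _ Psi.injective]

theorem LP_iso (e : F4 →+* K) {P : Submodule K (Fin 6 → K)}
    (hP : ∀ x ∈ P, ∀ y ∈ P, ∑ i, x i ^ 2 * y i = 0) : ∀ x ∈ LP e P, ∀ y ∈ LP e P, hV x y = 0 := by
  intro x hx y hy
  have h := hP _ (mem_LP.1 hy) _ (mem_LP.1 hx)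
  simp only [← map_pow, ← map_mul, ← map_sum] at h
  rw [Psi_form, map_eq_zero] at h
  exact h

theorem LP_lag (e : F4 →+* K) (he : ∀ x : K, x ^ 4 = x → ∃ a, e a = x)
    {P : Submodule K (Fin 6 → K)} (hP : IsFermatPlane K P) : IsLag (LP e P) := by
  have hp := polar e hP.2
  exact ⟨by rw [LP_finrank e he P (frob_stable hP.1 hp), hP.1], LP_iso e hp⟩

theorem LP_inf_finrank (e : F4 →+* K) (he : ∀ x : K, x ^ 4 = x → ∃ a, e a = x)
    {P P' : Submodule K (Fin 6 → K)} (hP : IsFermatPlane K P) (hP' : IsFermatPlane K P') :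
    Module.finrank F4 (LP e P ⊓ LP e P' : Submodule F4 VV)
      = Module.finrank K (P ⊓ P' : Submodule K (Fin 6 → K)) := by
  have h1 := frob_stable hP.1 (polar e hP.2)
  have h2 := frob_stable hP'.1 (polar e hP'.2)
  exact LP_finrank e he (P ⊓ P') (fun x hx => ⟨h1 x hx.1, h2 x hx.2⟩)

theorem LP_surj (e : F4 →+* K) (he : ∀ x : K, x ^ 4 = x → ∃ a, e a = x)
    {L : Submodule F4 VV} (hL : IsLag L) : ∃ P, IsFermatPlane K P ∧ LP e P = L := by
  let S : Set (Fin 6 → K) := (fun x : VV => fun i => e (Psi x i)) '' (L : Set VV)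
  let P := Submodule.span K S
  have hiso : ∀ x ∈ P, ∀ y ∈ P, ∑ i, x i ^ 2 * y i = 0 := by
    intro x hx y hy
    induction hx using Submodule.span_induction with
    | zero => simp
    | add a b _ _ iha ihb =>
      simp only [Pi.add_apply, CharTwo.add_sq, add_mul, Finset.sum_add_distrib, iha, ihb, add_zero]
    | smul c a _ iha =>
      simp only [Pi.smul_apply, smul_eq_mul, mul_pow, mul_assoc, ← Finset.mul_sum, iha, mul_zero]
    | mem x hx =>
      obtain ⟨l, hl, rfl⟩ := hx
      induction hy using Submodule.span_induction with
      | zero => simp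
      | add a b _ _ iha ihb =>
        simp only [Pi.add_apply, mul_add, Finset.sum_add_distrib, iha, ihb, add_zero]
      | smul c a _ iha =>
        simp only [Pi.smul_apply, smul_eq_mul, mul_left_comm _ c, ← Finset.mul_sum, iha, mul_zero]
      | mem y hy =>
        obtain ⟨l', hl', rfl⟩ := hy
        simp only [← map_pow, ← map_mul, ← map_sum]
        rw [Psi_form, hL.iso _ hl' _ hl, map_zero]
  have hs : ∀ x ∈ P, (fun i => x i ^ 4) ∈ P := by
    intro x hx
    induction hx using Submodule.span_induction with
    | zero =>
      have : (fun i : Fin 6 => (0 : Fin 6 → K) i ^ 4) = 0 := by ext i; simp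
      rw [this]; exact P.zero_mem
    | add a b _ _ iha ihb =>
      have : (fun i : Fin 6 => (a + b) i ^ 4) = (fun i => a i ^ 4) + fun i => b i ^ 4 := by
        ext i
        simp only [Pi.add_apply]
        have : ∀ x : K, x ^ 4 = (x ^ 2) ^ 2 := fun x => by ring
        rw [this, CharTwo.add_sq, CharTwo.add_sq, ← this, ← this]
      rw [this]; exact P.add_mem iha ihb
    | smul c a _ iha =>
      have : (fun i : Fin 6 => (c • a) i ^ 4) = c ^ 4 • fun i => a i ^ 4 := by
        ext i
        simp [mul_pow]
      rw [this]; exact P.smul_mem _ iha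
    | mem x hx =>
      obtain ⟨l, hl, rfl⟩ := hx
      have : (fun i => e (Psi l i) ^ 4) = fun i => e (Psi l i) := by
        ext i
        rw [← map_pow]
        have : ∀ a : F4, a ^ 4 = a := by decide
        rw [this]
      simp only [this]
      exact Submodule.subset_span ⟨l, hl, rfl⟩
  have hle : L ≤ LP e P := fun l hl => mem_LP.2 (Submodule.subset_span ⟨l, hl, rfl⟩)
  have h3 := iso_finrank_le _ (LP_iso e hiso)
  have heq : L = LP e P := Submodule.eq_of_le_of_finrank_le hle (by rw [hL.rk]; exact h3)
  refine ⟨P, ⟨?_, ?_⟩, heq.symm⟩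
  · rw [← LP_finrank e he P hs, ← heq, hL.rk]
  · intro x hx
    rw [← hiso x hx x hx]
    refine Finset.sum_congr rfl fun i _ => by ring

end planes

open F4

theorem edge_correspondence_exists (K : Type*) [Field K] [IsAlgClosed K]
    [CharP K 2] :
    ∃ φ : {P : Submodule K (Fin 6 → K) // IsFermatPlane K P} ≃ ↥TAB,
      ∀ P P' : {P : Submodule K (Fin 6 → K) // IsFermatPlane K P},
        icNum (Module.finrank K ↥(P.val ⊓ P'.val))
          = leechInner ((φ P) : Fin 24 → ℤ) ((φ P') : Fin 24 → ℤ) - 1 := by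
  obtain ⟨e, he⟩ := exists_emb K
  let f : {P : Submodule K (Fin 6 → K) // IsFermatPlane K P} → ↥TAB :=
    fun P => ⟨TL (LP e P.1), TL_mem (LP_lag e he P.2)⟩
  have hip : ∀ P P' : {P : Submodule K (Fin 6 → K) // IsFermatPlane K P},
      3 * ∑ j, TL (LP e P.1) j * TL (LP e P'.1) j
        = 32 - 8 * (-2 : ℤ) ^ (Module.finrank K ↥(P.val ⊓ P'.val)) := by
    intro P P'
    rw [← LP_inf_finrank e he P.2 P'.2]
    exact ip_formula (LP_lag e he P.2) (LP_lag e he P'.2)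
  have hbij : Function.Bijective f := by
    constructor
    · intro P P' h
      have h1 : TL (LP e P.1) = TL (LP e P'.1) := congrArg Subtype.val h
      have h2 := hip P P'
      have h3 := hip P P
      rw [← h1] at h2
      rw [inf_idem, P.2.1] at h3
      have hd : Module.finrank K ↥(P.val ⊓ P'.val) ≤ 3 :=
        (Submodule.finrank_mono inf_le_left).trans P.2.1.le
      have h4 : Module.finrank K ↥(P.val ⊓ P'.val) = 3 := by
        rw [h3] at h2
        generalize Module.finrank K ↥(P.val ⊓ P'.val) = d at h2 hd
        interval_cases d <;> first | rfl | (exfalso; norm_num at h2; done)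
      have h5 : P.val ⊓ P'.val = P.val :=
        Submodule.eq_of_le_of_finrank_eq inf_le_left (h4.trans P.2.1.symm)
      have h6 : P.val ⊓ P'.val = P'.val :=
        Submodule.eq_of_le_of_finrank_eq inf_le_right (h4.trans P'.2.1.symm)
      exact Subtype.ext (h5.symm.trans h6)
    · rintro ⟨T, hT⟩
      obtain ⟨L, hL, hLT⟩ := TAB_surj T hT
      obtain ⟨P, hP, hPL⟩ := LP_surj e he hL
      refine ⟨⟨P, hP⟩, Subtype.ext ?_⟩
      change TL (LP e P) = T
      rw [hPL, hLT]
  refine ⟨Equiv.ofBijective f hbij, fun P P' => ?_⟩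
  have h := hip P P'
  have hq : (3 : ℚ) * ((∑ j, TL (LP e P.1) j * TL (LP e P'.1) j : ℤ) : ℚ)
        = 32 - 8 * (-2 : ℚ) ^ (Module.finrank K ↥(P.val ⊓ P'.val)) := by
    exact_mod_cast h
  rw [leechInner_int]
  change _ = ((∑ j, TL (LP e P.1) j * TL (LP e P'.1) j : ℤ) : ℚ) / 8 - 1
  rw [icNum]
  linarith
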